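/- arXiv:2107.04081 — 2 statements merged into one kernel-verified Lean document; each statement's English description precedes it below -/
import Mathlib

section
/- Let F = ⟨S_A, S_B, O, ρ⟩ be a game form and let K be a set of colors with at least two elements. Call a deterministic concurrent arena C = ⟨S_A, S_B, Q, q0, δ, K, col⟩ built on F if for every state q ∈ Q there is a function h_q : O → Q with δ(q,a,b) = h_q(ρ(a,b)) for all a, b (every local interaction is obtained from F by a renaming of the outcomes). The following are equivalent: (1) F is determined; (2) for every Borel W ⊆ K^ω, every game ⟨C, W⟩ with C built on F is determined; (3) there exists a Borel W with ∅ ⊊ W ⊊ K^ω such that every game ⟨C, W⟩ with C built on F is determined. -/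
open MeasureTheory
open scoped Classical

universe u

/-- The cylinder set generated by a finite word. -/
def Cyl {K : Type u} (w : List K) : Set (ℕ → K) :=
  {ρ | ∀ i : ℕ, ∀ h : i < w.length, ρ i = w.get ⟨i, h⟩}

/-- The σ-algebra on `ℕ → K` generated by cylinder sets. -/
def BorelSeq (K : Type u) : MeasurableSpace (ℕ → K) :=
  MeasurableSpace.generateFrom {s | ∃ w : List K, s = Cyl w}

/-- A game form (given by its outcome function `ρ : S_A → S_B → O`) is determined if
for every subset `V` of outcomes, either Player A can force the outcome into `V`,
or Player B can force it out of `V`. -/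
def GFDetermined {SA SB O : Type u} (ρ : SA → SB → O) : Prop :=
  ∀ V : Set O, (∃ a, ∀ b, ρ a b ∈ V) ∨ (∃ b, ∀ a, ρ a b ∉ V)

/-- The color history `col(π_0,π_1) ⋯ col(π_{n-1},π_n)` of a play prefix. -/
def colorHist {Q K : Type u} (col : Q → Q → K) (π : ℕ → Q) (n : ℕ) : List K :=
  List.ofFn (fun i : Fin n => col (π i) (π (i + 1)))

/-- The color sequence of an infinite play. -/
def colorSeq {Q K : Type u} (col : Q → Q → K) (π : ℕ → Q) : ℕ → K :=
  fun n => col (π n) (π (n + 1))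

/-- `π` is a play consistent with Player A's color strategy `sA`. -/
def PlayA {A B Q K : Type u} (q0 : Q) (δ : Q → A → B → Q) (col : Q → Q → K)
    (sA : List K → Q → A) (π : ℕ → Q) : Prop :=
  π 0 = q0 ∧ ∀ n, ∃ b, π (n + 1) = δ (π n) (sA (colorHist col π n) (π n)) b

/-- `π` is a play consistent with Player B's color strategy `sB`. -/
def PlayB {A B Q K : Type u} (q0 : Q) (δ : Q → A → B → Q) (col : Q → Q → K)
    (sB : List K → Q → B) (π : ℕ → Q) : Prop :=
  π 0 = q0 ∧ ∀ n, ∃ a, π (n + 1) = δ (π n) a (sB (colorHist col π n) (π n))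

/-- Player A's color strategy `sA` is winning for objective `W`. -/
def WinA {A B Q K : Type u} (q0 : Q) (δ : Q → A → B → Q) (col : Q → Q → K)
    (W : Set (ℕ → K)) (sA : List K → Q → A) : Prop :=
  ∀ π : ℕ → Q, PlayA q0 δ col sA π → colorSeq col π ∈ W

/-- Player B's color strategy `sB` is winning for the objective complementary to `W`. -/
def WinB {A B Q K : Type u} (q0 : Q) (δ : Q → A → B → Q) (col : Q → Q → K)
    (W : Set (ℕ → K)) (sB : List K → Q → B) : Prop :=
  ∀ π : ℕ → Q, PlayB q0 δ col sB π → colorSeq col π ∉ W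

/-- The arena with transition function `δ` is built on the game form `ρ` if every
local interaction `δ q` is obtained from `ρ` by a renaming of the outcomes. -/
def BuiltOn {SA SB O Q : Type u} (ρ : SA → SB → O) (δ : Q → SA → SB → Q) : Prop :=
  ∀ q : Q, ∃ h : O → Q, ∀ a b, δ q a b = h (ρ a b)

/-!
Let the two players of a concurrent game move one after the other, A first. This sequential game is
a Borel game, hence determined. A winning strategy of A for it is one for the concurrent game too.
If B wins it, then in each round B has an answer `f a` to every action `a` of A, and determinacy of
the game form, applied to the set of outcomes that are not of the form `ρ a (f a)`, yields a single
action `b` such that every `ρ a b` is some `ρ a' (f a')`: B can play `b` and pretend that A has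
played `a'`. The resulting strategies depend on the whole history; a choice of lexicographically
least histories makes them depend on the color history and the current state alone. Conversely, an
arena in which the color sequence only records whether the first outcome lies in a given set of
outcomes turns determinacy of its game into determinacy of the game form.

Borel determinacy is proved by Martin's unravelling. A covering of a game lets strategies for the
covering game be carried over to the game below, in such a way that plays consistent with the new
strategy lift to plays consistent with the old one. An open set is unravelled, that is, made to
depend on a finite stage only, by a covering in which I announces a set of positions at which the
play may enter the open set. II either challenges one of them, through which the play must then
pass, or accepts; after an acceptance I loses on entering the open set at a position not announced,
and II on entering it at an announced one. Inverse limits of coverings take care of countable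
unions.
-/
/-- A forest of positions without leaves, the roots being the nodes of level `0`, on which two
players, I (`false`) and II (`true`), move in turn: player `i` moves at the levels `n` with
`n.bodd = i`. A player may lose at a finite stage, and `lost p = some i` records that player `i`
has already lost when `p` is reached. By convention `parent` need not fix a root. -/
structure GameForest : Type (u + 1) where
  Node : Type u
  level : Node → ℕ
  parent : Node → Node
  lost : Node → Option Bool
  level_parent : ∀ p, level (parent p) = level p - 1
  exists_child : ∀ p, ∃ q, level q = level p + 1 ∧ parent q = p
  lost_of_parent : ∀ p i, lost (parent p) = some i → lost p = some i

namespace GameForest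

section Order

variable {T : GameForest.{u}}

/-- The ancestor of `p` at level `n`, or `p` itself if `p` has level at most `n`. -/
def anc (p : T.Node) (n : ℕ) : T.Node := T.parent^[T.level p - n] p

lemma level_parent_iterate (k : ℕ) (p : T.Node) :
    T.level (T.parent^[k] p) = T.level p - k := by
  induction k generalizing p with
  | zero => rfl
  | succ k ih => rw [Function.iterate_succ_apply, ih, T.level_parent]; omega

lemma level_anc (p : T.Node) (n : ℕ) : T.level (anc p n) = min (T.level p) n := by
  rw [anc, level_parent_iterate]; omega

lemma anc_of_level_le {p : T.Node} {n : ℕ} (h : T.level p ≤ n) : anc p n = p := by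
  rw [anc, Nat.sub_eq_zero_of_le h, Function.iterate_zero, id]

lemma anc_parent {p : T.Node} {n : ℕ} (h : n < T.level p) : anc (T.parent p) n = anc p n := by
  have hsub : T.level p - n = T.level p - 1 - n + 1 := by omega
  rw [anc, anc, T.level_parent, hsub, Function.iterate_succ_apply]

lemma anc_anc (p : T.Node) (m n : ℕ) : anc (anc p m) n = anc p (min m n) := by
  rw [anc, level_anc, anc, anc, ← Function.iterate_add_apply]
  congr 2; omega

/-- The ancestor order: `v ≤ p` if every play through `p` has passed through `v`. -/
instance : PartialOrder T.Node where
  le v p := anc p (T.level v) = v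
  le_refl _ := anc_of_level_le le_rfl
  le_trans u v w huv hvw := by
    have hl : T.level u ≤ T.level v := by
      have := level_anc v (T.level u)
      rw [huv] at this
      omega
    rw [← hvw, anc_anc, min_eq_right hl] at huv
    exact huv
  le_antisymm u v huv hvu := by
    have h₁ := level_anc v (T.level u)
    have h₂ := level_anc u (T.level v)
    rw [huv] at h₁
    rw [hvu] at h₂
    rw [← huv, anc_of_level_le (by omega)]

lemma le_iff_anc_eq {v p : T.Node} : v ≤ p ↔ anc p (T.level v) = v := Iff.rfl

lemma level_mono : Monotone T.level := fun v p h ↦ by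
  have := level_anc p (T.level v)
  rw [le_iff_anc_eq.1 h] at this
  omega

lemma anc_le (p : T.Node) (n : ℕ) : anc p n ≤ p := by
  rcases le_total (T.level p) n with h | h
  · rw [anc_of_level_le h]
  · rw [le_iff_anc_eq, level_anc, min_eq_right h]

lemma le_parent {v p : T.Node} (h : v ≤ p) (hl : T.level v < T.level p) : v ≤ T.parent p := by
  rwa [le_iff_anc_eq, anc_parent hl]

lemma parent_le {p : T.Node} (h : 0 < T.level p) : T.parent p ≤ p := by
  rw [le_iff_anc_eq, ← anc_parent (by rw [T.level_parent]; omega), anc_of_level_le le_rfl]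

lemma le_of_le_of_level_le {v w p : T.Node} (hv : v ≤ p) (hw : w ≤ p)
    (hl : T.level v ≤ T.level w) : v ≤ w := by
  rw [le_iff_anc_eq, ← le_iff_anc_eq.1 hw, anc_anc, min_eq_right hl, le_iff_anc_eq.1 hv]

lemma eq_of_le_of_level_eq {v w p : T.Node} (hv : v ≤ p) (hw : w ≤ p)
    (hl : T.level v = T.level w) : v = w :=
  (le_of_le_of_level_le hv hw hl.le).antisymm (le_of_le_of_level_le hw hv hl.ge)

lemma eq_of_le_of_level_le {v p : T.Node} (h : v ≤ p) (hl : T.level p ≤ T.level v) : v = p :=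
  eq_of_le_of_level_eq h le_rfl ((level_mono h).antisymm hl)

lemma le_induction {P : T.Node → Prop} (hP : ∀ p, P (T.parent p) → P p) {v p : T.Node}
    (h : v ≤ p) (hv : P v) : P p := by
  have hiter : ∀ k p, P (T.parent^[k] p) → P p := by
    intro k
    induction k with
    | zero => exact fun p hp ↦ hp
    | succ k ih => exact fun p hp ↦ hP p (ih _ hp)
  exact hiter (T.level p - T.level v) p (by rwa [← anc, le_iff_anc_eq.1 h])

lemma lost_of_le {v p : T.Node} {i : Bool} (h : v ≤ p) (hv : T.lost v = some i) :
    T.lost p = some i :=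
  le_induction (P := fun p ↦ T.lost p = some i) (fun p ↦ T.lost_of_parent p i) h hv

end Order

/-- The sequence `x` is a play, started at some root. -/
def IsPlay (T : GameForest.{u}) (x : ℕ → T.Node) : Prop :=
  ∀ n, T.level (x n) = n ∧ T.parent (x (n + 1)) = x n

/-- A strategy, which serves for either player: it selects a child of every node. -/
@[ext]
structure Strategy (T : GameForest.{u}) : Type u where
  next : T.Node → T.Node
  level_next : ∀ p, T.level (next p) = T.level p + 1
  parent_next : ∀ p, T.parent (next p) = p

instance (T : GameForest.{u}) : CoeFun (Strategy T) fun _ ↦ T.Node → T.Node := ⟨Strategy.next⟩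

instance (T : GameForest.{u}) : Nonempty (Strategy T) :=
  have ⟨next, hnext⟩ := Classical.axiomOfChoice T.exists_child
  ⟨⟨next, fun p ↦ (hnext p).1, fun p ↦ (hnext p).2⟩⟩

/-- The play `x` is consistent with `σ` used as a strategy of player `i`. -/
def Consistent {T : GameForest.{u}} (i : Bool) (σ : Strategy T) (x : ℕ → T.Node) : Prop :=
  ∀ n, n.bodd = i → x (n + 1) = σ (x n)

namespace IsPlay

variable {T : GameForest.{u}} {x : ℕ → T.Node}

lemma level_eq (hx : T.IsPlay x) (n : ℕ) : T.level (x n) = n := (hx n).1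

lemma parent_eq (hx : T.IsPlay x) (n : ℕ) : T.parent (x (n + 1)) = x n := (hx n).2

lemma anc_eq (hx : T.IsPlay x) {m n : ℕ} (h : m ≤ n) : anc (x n) m = x m := by
  induction n, h using Nat.le_induction with
  | base => exact anc_of_level_le (hx.level_eq m).le
  | succ n hn ih => rw [← anc_parent (by rw [hx.level_eq]; omega), hx.parent_eq, ih]

lemma mono (hx : T.IsPlay x) : Monotone x := fun m n h ↦ by
  rw [le_iff_anc_eq, hx.level_eq, hx.anc_eq h]

lemma eq_of_le (hx : T.IsPlay x) {v : T.Node} {n : ℕ} (h : v ≤ x n) : v = x (T.level v) := by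
  have hl := level_mono h
  rw [hx.level_eq] at hl
  rw [← hx.anc_eq hl, le_iff_anc_eq.1 h]

lemma lost_mono (hx : T.IsPlay x) {m n : ℕ} (h : m ≤ n) {i : Bool}
    (hs : T.lost (x m) = some i) : T.lost (x n) = some i := lost_of_le (hx.mono h) hs

end IsPlay

/-- A level-preserving map of forests under which a game that is undecided upstairs is also
undecided downstairs. -/
structure Hom (S T : GameForest.{u}) : Type u where
  toFun : S.Node → T.Node
  level_toFun : ∀ p, T.level (toFun p) = S.level p
  toFun_parent : ∀ p, toFun (S.parent p) = T.parent (toFun p)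
  lost_toFun : ∀ p, S.lost p = none → T.lost (toFun p) = none

instance (S T : GameForest.{u}) : CoeFun (Hom S T) fun _ ↦ S.Node → T.Node := ⟨Hom.toFun⟩

namespace Hom

variable {R S T : GameForest.{u}}

/-- The identity map. -/
def refl (T : GameForest.{u}) : Hom T T where
  toFun p := p
  level_toFun _ := rfl
  toFun_parent _ := rfl
  lost_toFun _ h := h

/-- Composition of maps of forests. -/
def comp (g : Hom S T) (f : Hom R S) : Hom R T where
  toFun p := g (f p)
  level_toFun p := by rw [g.level_toFun, f.level_toFun]
  toFun_parent p := by rw [f.toFun_parent, g.toFun_parent]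
  lost_toFun p h := g.lost_toFun _ (f.lost_toFun p h)

lemma toFun_anc (f : Hom S T) (p : S.Node) (n : ℕ) : f (anc p n) = anc (f p) n := by
  rw [anc, anc, f.level_toFun]
  exact Function.Semiconj.iterate_right f.toFun_parent _ p

lemma mono (f : Hom S T) {v p : S.Node} (h : v ≤ p) : f v ≤ f p := by
  rw [le_iff_anc_eq, f.level_toFun, ← f.toFun_anc, le_iff_anc_eq.1 h]

lemma isPlay (f : Hom S T) {x : ℕ → S.Node} (hx : S.IsPlay x) : T.IsPlay fun n ↦ f (x n) :=
  fun n ↦ ⟨by rw [f.level_toFun, hx.level_eq], by rw [← f.toFun_parent, hx.parent_eq]⟩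

lemma eq_of_le (f : Hom S T) {y : ℕ → S.Node} {x : ℕ → T.Node} (hy : S.IsPlay y)
    (hx : T.IsPlay x) {m n : ℕ} (h : m ≤ n) (hn : f (y n) = x n) : f (y m) = x m := by
  rw [← (f.isPlay hy).anc_eq h, hn, hx.anc_eq h]

/-- The play `y` lifts `x` along `f` for player `i`: either it lies over `x` throughout, or player
`i` has lost it at a stage `n ≥ k` up to which it lies over `x`. -/
def Lifts (f : Hom S T) (k : ℕ) (i : Bool) (y : ℕ → S.Node) (x : ℕ → T.Node) : Prop :=
  (∀ n, f (y n) = x n ∧ S.lost (y n) = T.lost (x n)) ∨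
    ∃ n, k ≤ n ∧ S.lost (y n) = some i ∧ f (y n) = x n

lemma Lifts.exists_lost {f : Hom S T} {k : ℕ} {i : Bool} {y : ℕ → S.Node} {x : ℕ → T.Node}
    (h : f.Lifts k i y x) (hy : S.IsPlay y) (hx : T.IsPlay x) {n : ℕ}
    (hn : T.lost (x n) = some i) :
    ∃ m ≤ n, (m = n ∨ k ≤ m) ∧ S.lost (y m) = some i ∧ f (y m) = x m := by
  rcases h with h | ⟨m, hkm, hlost, hm⟩
  · exact ⟨n, le_rfl, .inl rfl, by rw [(h n).2, hn], (h n).1⟩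
  rcases le_total m n with hmn | hnm
  · exact ⟨m, hmn, .inr hkm, hlost, hm⟩
  have hfn := f.eq_of_le hy hx hnm hm
  refine ⟨n, le_rfl, .inl rfl, ?_, hfn⟩
  rcases hj : S.lost (y n) with _ | j
  · simpa only [hfn, hn, reduceCtorEq] using f.lost_toFun _ hj
  · exact (hy.lost_mono hnm hj).symm.trans hlost

lemma Lifts.mono {f : Hom S T} {k l : ℕ} {i : Bool} {y : ℕ → S.Node} {x : ℕ → T.Node}
    (h : f.Lifts k i y x) (hl : l ≤ k) : f.Lifts l i y x :=
  h.imp_right fun ⟨n, hn, hlost⟩ ↦ ⟨n, hl.trans hn, hlost⟩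

lemma Lifts.apply_eq {f : Hom S T} {k : ℕ} {i : Bool} {y : ℕ → S.Node} {x : ℕ → T.Node}
    (h : f.Lifts k i y x) (hy : S.IsPlay y) (hx : T.IsPlay x) {n : ℕ} (hn : n ≤ k) :
    f (y n) = x n := by
  rcases h with h | ⟨m, hm, -, hm'⟩
  · exact (h n).1
  · exact f.eq_of_le hy hx (hn.trans hm) hm'

lemma Lifts.comp {g : Hom S T} {f : Hom R S} {k : ℕ} {i : Bool} {z : ℕ → R.Node}
    {y : ℕ → S.Node} {x : ℕ → T.Node} (hg : g.Lifts k i y x) (hf : f.Lifts k i z y)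
    (hz : R.IsPlay z) (hy : S.IsPlay y) (hx : T.IsPlay x) : (g.comp f).Lifts k i z x := by
  rcases hg with hg | ⟨n, hn, hlost, hyx⟩
  · rcases hf with hf | ⟨n, hn, hlost, hzy⟩
    · exact .inl fun n ↦ ⟨(congrArg g (hf n).1).trans (hg n).1, (hf n).2.trans (hg n).2⟩
    · exact .inr ⟨n, hn, hlost, (congrArg g hzy).trans (hg n).1⟩
  · obtain ⟨m, hm, hk, hlost', hzy⟩ := hf.exists_lost hz hy hlost
    exact .inr ⟨m, hk.elim (fun h ↦ h ▸ hn) id, hlost',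
      (congrArg g hzy).trans (g.eq_of_le hy hx hm hyx)⟩

end Hom

/-- A `k`-covering of `T` by `S` in the sense of Martin: it is an isomorphism up to level `k`, it
pushes strategies down, and every play consistent with a pushed down strategy lifts. The push is
local, i.e. it depends at levels below `n` only on the original strategy at levels below `n`. -/
structure Cover (S T : GameForest.{u}) (k : ℕ) : Type u extends Hom S T where
  inj : ∀ p q, S.level p ≤ k → toFun p = toFun q → p = q
  surj : ∀ p, T.level p ≤ k → ∃ q, toFun q = p
  lost_eq : ∀ p, S.level p ≤ k → S.lost p = T.lost (toFun p)
  push : Bool → Strategy S → Strategy T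
  push_congr : ∀ i σ τ n, (∀ p, S.level p < n → σ p = τ p) →
    ∀ p, T.level p < n → push i σ p = push i τ p
  push_apply : ∀ i σ p, S.level p < k → push i σ (toFun p) = toFun (σ p)
  exists_lift : ∀ i σ x, T.IsPlay x → Consistent i (push i σ) x →
    ∃ y, S.IsPlay y ∧ Consistent i σ y ∧ toHom.Lifts k i y x

namespace Cover

variable {R S T : GameForest.{u}} {k l : ℕ}

instance (S T : GameForest.{u}) (k : ℕ) : CoeFun (Cover S T k) fun _ ↦ S.Node → T.Node :=
  ⟨fun C ↦ C.toFun⟩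

/-- A `k`-covering regarded as an `l`-covering, for `l ≤ k`. -/
def weaken (C : Cover S T k) (h : l ≤ k) : Cover S T l where
  toHom := C.toHom
  inj p q hp := C.inj p q (hp.trans h)
  surj p hp := C.surj p (hp.trans h)
  lost_eq p hp := C.lost_eq p (hp.trans h)
  push := C.push
  push_congr := C.push_congr
  push_apply i σ p hp := C.push_apply i σ p (hp.trans_le h)
  exists_lift i σ x hx hc :=
    have ⟨y, hy, hyc, hl⟩ := C.exists_lift i σ x hx hc
    ⟨y, hy, hyc, hl.mono h⟩

/-- The identity covering. -/
def refl (T : GameForest.{u}) (k : ℕ) : Cover T T k where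
  toHom := Hom.refl T
  inj _ _ _ h := h
  surj p _ := ⟨p, rfl⟩
  lost_eq _ _ := rfl
  push _ σ := σ
  push_congr _ _ _ _ h := h
  push_apply _ _ _ _ := rfl
  exists_lift _ _ x hx hc := ⟨x, hx, hc, .inl fun _ ↦ ⟨rfl, rfl⟩⟩

/-- Composition of coverings. -/
def comp (C : Cover S T k) (D : Cover R S k) : Cover R T k where
  toHom := C.toHom.comp D.toHom
  inj p q hp h := D.inj p q hp (C.inj _ _ (by rwa [D.level_toFun]) h)
  surj p hp := by
    obtain ⟨q, rfl⟩ := C.surj p hp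
    rw [C.level_toFun] at hp
    obtain ⟨r, rfl⟩ := D.surj q hp
    exact ⟨r, rfl⟩
  lost_eq p hp := (D.lost_eq p hp).trans (C.lost_eq _ (by rwa [D.level_toFun]))
  push i σ := C.push i (D.push i σ)
  push_congr i σ τ n h := C.push_congr i _ _ n (D.push_congr i _ _ n h)
  push_apply i σ p hp :=
    (C.push_apply i (D.push i σ) (D p) (by rwa [D.level_toFun])).trans
      (congrArg C (D.push_apply i σ p hp))
  exists_lift i σ x hx hc := by
    obtain ⟨y, hy, hyc, hl⟩ := C.exists_lift i _ x hx hc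
    obtain ⟨z, hz, hzc, hl'⟩ := D.exists_lift i _ y hy hyc
    exact ⟨z, hz, hzc, hl.comp hl' hz hy hx⟩

end Cover

end GameForest

/-! ### Unravelling an open set -/

namespace GameForest

section Unravelling

variable {T : GameForest.{u}} (O : UpperSet T.Node) (k : ℕ)

/-- The positions above level `k + 2` at which a play enters `O`. -/
def entries : Set T.Node := {v | Minimal (· ∈ O) v ∧ k + 2 < T.level v}

variable {O k} in
lemma eq_of_mem_entries {v w p : T.Node} (hv : v ∈ entries O k) (hw : w ∈ entries O k)
    (hvp : v ≤ p) (hwp : w ≤ p) : v = w := by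
  rcases le_total (T.level v) (T.level w) with h | h
  · exact hw.1.eq_of_le hv.1.1 (le_of_le_of_level_le hvp hwp h)
  · exact (hv.1.eq_of_le hw.1.1 (le_of_le_of_level_le hwp hvp h)).symm

/-- The element of `Z` visited on the way to `p`, if there is one. -/
noncomputable def hit (Z : Set T.Node) (p : T.Node) : Option T.Node :=
  if h : ∃ v ∈ Z, v ≤ p then some h.choose else none

variable {O k} in
lemma hit_eq_some {Z : Set T.Node} (hZ : Z ⊆ entries O k) {v p : T.Node} :
    hit Z p = some v ↔ v ∈ Z ∧ v ≤ p := by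
  by_cases h : ∃ v ∈ Z, v ≤ p
  · rw [hit, dif_pos h, Option.some_inj]
    have hc := h.choose_spec
    exact ⟨fun hv ↦ hv ▸ hc, fun hv ↦ eq_of_mem_entries (hZ hc.1) (hZ hv.1) hc.2 hv.2⟩
  · rw [hit, dif_neg h]
    exact ⟨fun hv ↦ (Option.some_ne_none _ hv.symm).elim, fun hv ↦ (h ⟨v, hv⟩).elim⟩

/-- The challenge `c` is admissible at `p` for the announced set `Y`: the challenged position is an
entry belonging to `Y`, and the play can still reach it or has already done so. -/
def Admissible (p : T.Node) (Y : Set T.Node) (c : Option T.Node) : Prop :=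
  ∀ u ∈ c, u ∈ Y ∧ u ∈ entries O k ∧ (p ≤ u ∨ u ≤ p)

variable {O k} in
lemma Admissible.parent {p : T.Node} {Y : Set T.Node} {c : Option T.Node}
    (h : Admissible O k p Y c) (hp : 0 < T.level p) : Admissible O k (T.parent p) Y c := by
  intro u hu
  obtain ⟨hY, hent, hpu | hup⟩ := h u hu
  · exact ⟨hY, hent, .inl ((parent_le hp).trans hpu)⟩
  refine ⟨hY, hent, ?_⟩
  rcases (level_mono hup).lt_or_eq with hl | hl
  · exact .inr (le_parent hup hl)
  · exact .inl ((parent_le hp).trans_eq (eq_of_le_of_level_le hup hl.ge).symm)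

variable {O k} in
lemma Admissible.exists_child {p : T.Node} {Y : Set T.Node} {c : Option T.Node}
    (h : Admissible O k p Y c) :
    ∃ q, T.level q = T.level p + 1 ∧ T.parent q = p ∧ Admissible O k q Y c := by
  by_cases hc : ∃ u ∈ c, T.level p < T.level u
  · obtain ⟨u, hu, hl⟩ := hc
    obtain ⟨hY, hent, hpu⟩ := h u hu
    replace hpu : p ≤ u := hpu.resolve_right fun h ↦ (level_mono h).not_gt hl
    have hlq : T.level (anc u (T.level p + 1)) = T.level p + 1 := by rw [level_anc]; omega
    refine ⟨anc u (T.level p + 1), hlq, ?_, fun v hv ↦ ?_⟩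
    · refine eq_of_le_of_level_eq ((parent_le (by omega)).trans (anc_le _ _)) hpu ?_
      rw [T.level_parent, hlq, Nat.add_sub_cancel]
    · obtain rfl := Option.mem_unique hu hv
      exact ⟨hY, hent, .inl (anc_le _ _)⟩
  · obtain ⟨q, hq, hqp⟩ := T.exists_child p
    refine ⟨q, hq, hqp, fun u hu ↦ ?_⟩
    obtain ⟨hY, hent, hpu⟩ := h u hu
    have hup : u ≤ p := hpu.elim
      (fun h ↦ (eq_of_le_of_level_le h (not_lt.1 fun hl ↦ hc ⟨u, hu, hl⟩)).ge) id
    exact ⟨hY, hent, .inr (hup.trans (hqp ▸ parent_le (by omega)))⟩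

/-- A position of the unravelled forest: a position `pos` of `T`, the set `announced` by the player
moving at level `k`, and the answer of the opponent at level `k + 1`, who may accept (`none`) or
challenge some announced position, which the play is then bound to reach. -/
@[ext] structure AnnotatedNode : Type u where
  pos : T.Node
  announced : Set T.Node
  challenge : Option T.Node
  announced_eq : T.level pos ≤ k → announced = ∅
  challenge_eq : T.level pos ≤ k + 1 → challenge = none
  admissible : Admissible O k pos announced challenge

/-- The position `p` annotated with the announced set `Y` and the challenge `c`, as far as they
have been chosen at the level of `p` and are admissible there. -/
noncomputable def annotate (p : T.Node) (Y : Set T.Node) (c : Option T.Node) :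
    AnnotatedNode O k where
  pos := p
  announced := if T.level p ≤ k then ∅ else Y
  challenge := if T.level p ≤ k + 1 ∨ ¬ Admissible O k p Y c then none else c
  announced_eq h := if_pos h
  challenge_eq h := if_pos (.inl h)
  admissible u hu := by
    split_ifs at hu with h
    · cases hu
    · push Not at h
      rw [if_neg (by omega)]
      exact h.2 u hu

section Annotate

variable {O k} {p : T.Node} {Y Y' : Set T.Node} {c c' : Option T.Node}

lemma announced_annotate (h : k < T.level p) : (annotate O k p Y c).announced = Y :=
  if_neg (by omega)

lemma challenge_annotate (h : k + 1 < T.level p) (ha : Admissible O k p Y c) :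
    (annotate O k p Y c).challenge = c :=
  if_neg (by simp only [not_or, not_not]; exact ⟨by omega, ha⟩)

lemma AnnotatedNode.eq_annotate_of_level_le {q : AnnotatedNode O k} (h : T.level q.pos ≤ k)
    (Y : Set T.Node) (c : Option T.Node) : q = annotate O k q.pos Y c :=
  AnnotatedNode.ext rfl ((q.announced_eq h).trans ((annotate O k q.pos Y c).announced_eq h).symm)
    ((q.challenge_eq (h.trans k.le_succ)).trans
      ((annotate O k q.pos Y c).challenge_eq (h.trans k.le_succ)).symm)

lemma annotate_eq_of_level_le (h : T.level p ≤ k) :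
    annotate O k p Y c = annotate O k p Y' c' :=
  AnnotatedNode.eq_annotate_of_level_le h Y' c'

lemma annotate_eq_of_level_le_succ (h : T.level p ≤ k + 1) :
    annotate O k p Y c = annotate O k p Y c' :=
  AnnotatedNode.ext rfl rfl
    ((AnnotatedNode.challenge_eq _ h).trans (AnnotatedNode.challenge_eq _ h).symm)

lemma eq_annotate {q : AnnotatedNode O k} (hp : q.pos = p)
    (hY : k < T.level p → q.announced = Y) (hc : k + 1 < T.level p → q.challenge = c)
    (ha : Admissible O k p Y c) : q = annotate O k p Y c := by
  subst hp
  refine AnnotatedNode.ext rfl ?_ ?_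
  · rcases le_or_gt (T.level q.pos) k with h | h
    · exact (q.announced_eq h).trans ((annotate O k q.pos Y c).announced_eq h).symm
    · rw [hY h, announced_annotate h]
  · rcases le_or_gt (T.level q.pos) (k + 1) with h | h
    · exact (q.challenge_eq h).trans ((annotate O k q.pos Y c).challenge_eq h).symm
    · rw [hc h, challenge_annotate h ha]

end Annotate

namespace AnnotatedNode

variable {O k}

/-- The annotated position one level below. -/
noncomputable def parent (q : AnnotatedNode O k) : AnnotatedNode O k :=
  annotate O k (T.parent q.pos) q.announced q.challenge

lemma announced_parent {q : AnnotatedNode O k} (h : k + 1 < T.level q.pos) :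
    q.parent.announced = q.announced :=
  announced_annotate (by rw [T.level_parent]; omega)

lemma challenge_parent {q : AnnotatedNode O k} (h : k + 2 < T.level q.pos) :
    q.parent.challenge = q.challenge :=
  challenge_annotate (by rw [T.level_parent]; omega) (q.admissible.parent (by omega))

lemma parent_annotate {p : T.Node} {Y : Set T.Node} {c : Option T.Node}
    (ha : Admissible O k p Y c) (hp : 0 < T.level p) :
    (annotate O k p Y c).parent = annotate O k (T.parent p) Y c := by
  refine eq_annotate rfl (fun h ↦ ?_) (fun h ↦ ?_) (ha.parent hp) <;> rw [T.level_parent] at h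
  · rw [announced_parent (show k + 1 < T.level p by omega), announced_annotate (by omega)]
  · rw [challenge_parent (show k + 2 < T.level p by omega), challenge_annotate (by omega) ha]

/-- The entry at which the play has left the range agreed upon by an accepting opponent, if any. -/
noncomputable def violation (q : AnnotatedNode O k) : Option T.Node :=
  if q.challenge = none then hit {v ∈ entries O k | T.lost v = none} q.pos else none

lemma violation_eq_some {q : AnnotatedNode O k} {v : T.Node} : q.violation = some v ↔
    q.challenge = none ∧ (v ∈ entries O k ∧ T.lost v = none) ∧ v ≤ q.pos := by
  have hsub : {v ∈ entries O k | T.lost v = none} ⊆ entries O k := fun v hv ↦ hv.1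
  unfold violation
  split_ifs with h
  · rw [hit_eq_some hsub, and_iff_right h, Set.mem_ofPred_eq]
  · simp only [h, false_and]

/-- The player who has lost: after an acceptance, the announcer loses on entering `O` outside the
announced set, and the opponent on entering `O` inside it. -/
noncomputable def lost (q : AnnotatedNode O k) : Option Bool :=
  q.violation.elim (T.lost q.pos) fun v ↦ some (decide (v ∈ q.announced))

lemma lost_of_violation_eq_some {q : AnnotatedNode O k} {v : T.Node} (h : q.violation = some v) :
    q.lost = some (decide (v ∈ q.announced)) := by rw [lost, h, Option.elim_some]

lemma lost_of_violation_eq_none {q : AnnotatedNode O k} (h : q.violation = none) :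
    q.lost = T.lost q.pos := by rw [lost, h, Option.elim_none]

lemma lost_pos_eq_none {q : AnnotatedNode O k} (h : q.lost = none) : T.lost q.pos = none := by
  rcases hv : q.violation with _ | v
  · rwa [lost_of_violation_eq_none hv] at h
  · cases (lost_of_violation_eq_some hv).symm.trans h

lemma violation_of_parent {q : AnnotatedNode O k} {v : T.Node}
    (h : q.parent.violation = some v) : k + 2 < T.level q.pos ∧ q.violation = some v := by
  obtain ⟨hc, hv, hvp⟩ := violation_eq_some.1 h
  change v ≤ T.parent q.pos at hvp
  have hlv := hv.1.2
  have hlp := level_mono hvp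
  rw [T.level_parent] at hlp
  have hl : k + 2 < T.level q.pos := by omega
  rw [challenge_parent hl] at hc
  exact ⟨hl, violation_eq_some.2 ⟨hc, hv, hvp.trans (parent_le (by omega))⟩⟩

lemma violation_parent {q : AnnotatedNode O k} {v : T.Node} (h : q.violation = some v)
    (hl : T.level v < T.level q.pos) : q.parent.violation = some v := by
  obtain ⟨hc, hv, hvq⟩ := violation_eq_some.1 h
  have hlv := hv.1.2
  exact violation_eq_some.2
    ⟨(challenge_parent (by omega)).trans hc, hv, le_parent hvq hl⟩

lemma lost_of_parent (q : AnnotatedNode O k) (i : Bool) (h : q.parent.lost = some i) :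
    q.lost = some i := by
  rcases hv : q.parent.violation with _ | v
  · rw [lost_of_violation_eq_none hv] at h
    have hq := T.lost_of_parent q.pos i h
    rw [lost_of_violation_eq_none, hq]
    refine Option.eq_none_iff_forall_ne_some.2 fun v hqv ↦ ?_
    obtain ⟨-, hlost, hvq⟩ := violation_eq_some.1 hqv
    rcases (level_mono hvq).lt_or_eq with hl | hl
    · cases hv.symm.trans (violation_parent hqv hl)
    · obtain rfl := eq_of_le_of_level_le hvq hl.ge
      cases hlost.2.symm.trans hq
  · obtain ⟨hl, hqv⟩ := violation_of_parent hv
    rw [lost_of_violation_eq_some hv, announced_parent (by omega)] at h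
    rw [lost_of_violation_eq_some hqv, h]

lemma exists_child (q : AnnotatedNode O k) :
    ∃ r : AnnotatedNode O k, T.level r.pos = T.level q.pos + 1 ∧ r.parent = q := by
  obtain ⟨p, hl, hp, ha⟩ := q.admissible.exists_child
  refine ⟨annotate O k p q.announced q.challenge, hl, ?_⟩
  rw [parent_annotate ha (by omega), hp]
  exact (eq_annotate rfl (fun _ ↦ rfl) (fun _ ↦ rfl) q.admissible).symm

end AnnotatedNode

/-- The game in which the player moving at level `k` announces how they intend to enter `O`, and
the opponent accepts the announcement or challenges one of the announced entries. -/
noncomputable def unravelling : GameForest.{u} where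
  Node := AnnotatedNode O k
  level q := T.level q.pos
  parent := AnnotatedNode.parent
  lost := AnnotatedNode.lost
  level_parent q := T.level_parent q.pos
  exists_child := AnnotatedNode.exists_child
  lost_of_parent := AnnotatedNode.lost_of_parent

/-- The map forgetting the annotations. -/
noncomputable def unravellingHom : Hom (unravelling O k) T where
  toFun := AnnotatedNode.pos
  level_toFun _ := rfl
  toFun_parent _ := rfl
  lost_toFun _ := AnnotatedNode.lost_pos_eq_none

section Play

variable {O k} {x : ℕ → T.Node}

lemma isPlay_annotate (hx : T.IsPlay x) {Y : Set T.Node} {c : Option T.Node}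
    (ha : ∀ n, Admissible O k (x n) Y c) :
    (unravelling O k).IsPlay fun n ↦ annotate O k (x n) Y c := by
  refine fun n ↦ ⟨hx.level_eq n, ?_⟩
  have hpar := AnnotatedNode.parent_annotate (ha (n + 1)) (by rw [hx.level_eq]; omega)
  rwa [hx.parent_eq] at hpar

lemma lifts_annotate (hx : T.IsPlay x) {i : Bool} {Y : Set T.Node} {c : Option T.Node}
    (ha : ∀ n, Admissible O k (x n) Y c)
    (hi : c = none → ∀ n, x n ∈ entries O k → decide (x n ∈ Y) = i) :
    (unravellingHom O k).Lifts k i (fun n ↦ annotate O k (x n) Y c) x := by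
  by_cases hviol : ∀ n, (annotate O k (x n) Y c).violation = none
  · exact .inl fun n ↦ ⟨rfl, AnnotatedNode.lost_of_violation_eq_none (hviol n)⟩
  push Not at hviol
  obtain ⟨n, hn⟩ := hviol
  obtain ⟨v, hv⟩ := Option.ne_none_iff_exists'.1 hn
  obtain ⟨hc, ⟨hent, -⟩, hvn⟩ := AnnotatedNode.violation_eq_some.1 hv
  have hlv := hent.2
  have hln : k + 2 < T.level (x n) := hlv.trans_le (level_mono hvn)
  rw [challenge_annotate (by omega) (ha n)] at hc
  refine .inr ⟨n, by rw [hx.level_eq] at hln; omega, ?_, rfl⟩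
  have hvY : decide (v ∈ Y) = i := by
    have hxv := hx.eq_of_le hvn
    rw [hxv] at hent ⊢
    exact hi hc _ hent
  refine (AnnotatedNode.lost_of_violation_eq_some hv).trans ?_
  rw [announced_annotate (by omega), hvY]

variable (O k) in
lemma exists_eventual_hit (hx : T.IsPlay x) {Z : Set T.Node} (hZ : Z ⊆ entries O k) :
    ∃ c, (∀ n, hit Z (x n) = c ∨ ∃ m > n, c = some (x m)) ∧ (c = none → ∀ n, x n ∉ Z) ∧
      ∀ u ∈ c, u ∈ Z ∧ ∃ m, u = x m := by
  by_cases h : ∃ m, x m ∈ Z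
  · obtain ⟨m, hm⟩ := h
    refine ⟨some (x m), fun n ↦ ?_, fun h ↦ (Option.some_ne_none _ h).elim, ?_⟩
    · rcases le_or_gt m n with hmn | hnm
      · exact .inl ((hit_eq_some hZ).2 ⟨hm, hx.mono hmn⟩)
      · exact .inr ⟨m, hnm, rfl⟩
    · rintro u ⟨⟩
      exact ⟨hm, m, rfl⟩
  · push Not at h
    refine ⟨none, fun n ↦ .inl (Option.eq_none_iff_forall_ne_some.2 fun v hv ↦ ?_),
      fun _ ↦ h, fun u hu ↦ by cases hu⟩
    obtain ⟨hvZ, hvn⟩ := (hit_eq_some hZ).1 hv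
    exact h _ (hx.eq_of_le hvn ▸ hvZ)

end Play

section Push

variable {O k} (σ : Strategy (unravelling O k))

/-- The successor of `q` selected by `σ`, as an annotated position. -/
def move (q : AnnotatedNode O k) : AnnotatedNode O k := σ q

lemma level_pos_move (q : AnnotatedNode O k) :
    T.level (move σ q).pos = T.level q.pos + 1 := σ.level_next q

lemma parent_move (q : AnnotatedNode O k) : (move σ q).parent = q := σ.parent_next q

/-- The set announced by `σ` on the way to `p`. -/
noncomputable def announcement (p : T.Node) : Set T.Node :=
  (move σ (annotate O k (anc p k) ∅ none)).announced

/-- The answer of `σ` on the way to `p` to an announcement. -/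
noncomputable def reply (p : T.Node) (Y : Set T.Node) : Option T.Node :=
  (move σ (annotate O k (anc p (k + 1)) Y none)).challenge

variable (O k) in
/-- The entries that the answering function `r` challenges in some announcement. -/
def challenged (r : Set T.Node → Option T.Node) : Set T.Node :=
  {u ∈ entries O k | ∃ Y, u ∈ Y ∧ r Y = some u}

variable (O k) in
/-- An announcement answered by `c`. The complement of the challenged entries must be accepted. -/
noncomputable def announcementFor (r : Set T.Node → Option T.Node) (c : Option T.Node) :
    Set T.Node :=
  c.elim (challenged O k r)ᶜ fun u ↦ if h : ∃ Y, u ∈ Y ∧ r Y = some u then h.choose else ∅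

lemma announcementFor_some {r : Set T.Node → Option T.Node} {u : T.Node}
    (hu : u ∈ challenged O k r) :
    u ∈ announcementFor O k r (some u) ∧ r (announcementFor O k r (some u)) = some u := by
  rw [announcementFor, Option.elim_some, dif_pos hu.2]
  exact hu.2.choose_spec

lemma apply_announcementFor {r : Set T.Node → Option T.Node}
    (hr : ∀ Y, ∀ u ∈ r Y, u ∈ Y ∧ u ∈ entries O k) {c : Option T.Node}
    (hc : ∀ u ∈ c, u ∈ challenged O k r) : r (announcementFor O k r c) = c := by
  rcases c with _ | u
  · refine Option.eq_none_iff_forall_ne_some.2 fun u hu ↦ ?_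
    obtain ⟨hY, hent⟩ := hr _ u hu
    exact hY ⟨hent, _, hY, hu⟩
  · exact (announcementFor_some (hc u rfl)).2

/-- The annotation of `p` under which player `i` imagines to be playing when following `σ` in `T`.
The answering player pretends that the opponent has announced only entries that `σ` never
challenges, until such a challenged entry is reached. -/
noncomputable def guess (i : Bool) (p : T.Node) : Set T.Node × Option T.Node :=
  if i then
    (announcementFor O k (reply σ p) (hit (challenged O k (reply σ p)) p),
      hit (challenged O k (reply σ p)) p)
  else (announcement σ p, hit (entries O k ∩ announcement σ p) p)

/-- The strategy in `T` induced by a strategy in the unravelling. -/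
noncomputable def pushStrategy (i : Bool) : Strategy T where
  next p := (move σ (annotate O k p (guess σ i p).1 (guess σ i p).2)).pos
  level_next _ := level_pos_move σ _
  parent_next _ := congrArg AnnotatedNode.pos (parent_move σ _)

lemma guess_congr {τ : Strategy (unravelling O k)} {n : ℕ}
    (h : ∀ q, (unravelling O k).level q < n → σ q = τ q) (i : Bool) {p : T.Node}
    (hp : T.level p < n) : guess σ i p = guess τ i p := by
  have hlt : ∀ m, T.level (anc p m) < n := fun m ↦ by rw [level_anc]; omega
  have hann : announcement σ p = announcement τ p :=
    congrArg AnnotatedNode.announced (h _ (hlt k))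
  have hrep : reply σ p = reply τ p :=
    funext fun Y ↦ congrArg AnnotatedNode.challenge (h _ (hlt (k + 1)))
  rw [guess, guess, hann, hrep]

lemma pushStrategy_congr {τ : Strategy (unravelling O k)} {n : ℕ}
    (h : ∀ q, (unravelling O k).level q < n → σ q = τ q) (i : Bool) {p : T.Node}
    (hp : T.level p < n) : pushStrategy σ i p = pushStrategy τ i p := by
  refine congrArg AnnotatedNode.pos ?_
  rw [← guess_congr σ h i hp]
  exact h _ hp

variable {σ} {i : Bool} {x : ℕ → T.Node}

lemma pos_move_annotate (hx : T.IsPlay x) (hσ : Consistent i (pushStrategy σ i) x) {n : ℕ}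
    (hn : n.bodd = i) {Y : Set T.Node} {c : Option T.Node}
    (hc : k + 1 ≤ n → (move σ (annotate O k (x n) Y c)).challenge = c)
    (hg : k < n → guess σ i (x n) = (Y, c) ∨ ∃ m > n, c = some (x m)) :
    (move σ (annotate O k (x n) Y c)).pos = x (n + 1) := by
  rcases le_or_gt n k with hnk | hkn
  · rw [hσ n hn, annotate_eq_of_level_le (by rwa [hx.level_eq])]
    rfl
  rcases hg hkn with hg | ⟨m, hm, rfl⟩
  · rw [hσ n hn]
    change _ = (move σ (annotate O k (x n) (guess σ i (x n)).1 (guess σ i (x n)).2)).pos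
    rw [hg]
  have hl : T.level (move σ (annotate O k (x n) Y (some (x m)))).pos = n + 1 :=
    (level_pos_move σ _).trans (congrArg (· + 1) (hx.level_eq n))
  obtain ⟨-, -, hle | hle⟩ :=
    (move σ (annotate O k (x n) Y (some (x m)))).admissible (x m) (hc hkn)
  · rw [hx.eq_of_le hle, hl]
  · have hlm := level_mono hle
    rw [hl, hx.level_eq] at hlm
    obtain rfl : m = n + 1 := by omega
    exact (eq_of_le_of_level_le hle (by rw [hl, hx.level_eq])).symm

lemma consistent_annotate (hx : T.IsPlay x) (hσ : Consistent i (pushStrategy σ i) x)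
    {Y : Set T.Node} {c : Option T.Node} (ha : ∀ n, Admissible O k (x n) Y c)
    (hY : k.bodd = i → (move σ (annotate O k (x k) Y c)).announced = Y)
    (hc : (k + 1).bodd = i → (move σ (annotate O k (x (k + 1)) Y c)).challenge = c)
    (hg : ∀ n > k, guess σ i (x n) = (Y, c) ∨ ∃ m > n, c = some (x m)) :
    Consistent i σ fun n ↦ annotate O k (x n) Y c := by
  intro n hn
  have hlev : T.level (move σ (annotate O k (x n) Y c)).pos = n + 1 :=
    (level_pos_move σ _).trans (congrArg (· + 1) (hx.level_eq n))
  have hpar : (move σ (annotate O k (x n) Y c)).parent = annotate O k (x n) Y c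
      := parent_move σ _
  have hYn : k ≤ n → (move σ (annotate O k (x n) Y c)).announced = Y := fun h ↦ by
    rcases h.eq_or_lt with rfl | h
    · exact hY hn
    · rw [← AnnotatedNode.announced_parent (by omega), hpar,
        announced_annotate (by rwa [hx.level_eq])]
  have hcn : k + 1 ≤ n → (move σ (annotate O k (x n) Y c)).challenge = c := fun h ↦ by
    rcases h.eq_or_lt with rfl | h
    · exact hc hn
    · rw [← AnnotatedNode.challenge_parent (by omega), hpar,
        challenge_annotate (by rwa [hx.level_eq]) (ha n)]
  have hpos := pos_move_annotate hx hσ hn hcn (hg n)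
  rw [hpos] at hlev
  exact (eq_annotate hpos (fun h ↦ hYn (by omega)) (fun h ↦ hcn (by omega)) (ha (n + 1))).symm

end Push

section Cover

variable {O k}

lemma announcement_eq {σ : Strategy (unravelling O k)} {x : ℕ → T.Node} (hx : T.IsPlay x) {n : ℕ}
    (h : k ≤ n) (Y : Set T.Node) (c : Option T.Node) :
    announcement σ (x n) = (move σ (annotate O k (x k) Y c)).announced := by
  rw [announcement, hx.anc_eq h, annotate_eq_of_level_le (hx.level_eq k).le]

lemma reply_eq {σ : Strategy (unravelling O k)} {x : ℕ → T.Node} (hx : T.IsPlay x) {n : ℕ}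
    (h : k < n) (Y : Set T.Node) (c : Option T.Node) :
    reply σ (x n) Y = (move σ (annotate O k (x (k + 1)) Y c)).challenge := by
  rw [reply, hx.anc_eq (show k + 1 ≤ n from h),
    annotate_eq_of_level_le_succ (hx.level_eq (k + 1)).le]

lemma mem_of_mem_reply {σ : Strategy (unravelling O k)} {x : ℕ → T.Node} (hx : T.IsPlay x)
    {Y : Set T.Node} {u : T.Node} (hu : u ∈ reply σ (x (k + 1)) Y) : u ∈ Y ∧ u ∈ entries O k := by
  rw [reply_eq hx k.lt_succ_self Y none] at hu
  obtain ⟨hY, hent, -⟩ := (move σ (annotate O k (x (k + 1)) Y none)).admissible u hu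
  have hl := hx.level_eq (k + 1)
  have hlt : k + 1 < T.level (move σ (annotate O k (x (k + 1)) Y none)).pos := by
    rw [level_pos_move]
    change k + 1 < T.level (x (k + 1)) + 1
    omega
  rw [← AnnotatedNode.announced_parent hlt, parent_move, announced_annotate (by omega)] at hY
  exact ⟨hY, hent⟩

lemma admissible_of_mem {x : ℕ → T.Node} (hx : T.IsPlay x) {Y : Set T.Node} {c : Option T.Node}
    (h : ∀ u ∈ c, u ∈ Y ∧ u ∈ entries O k ∧ ∃ m, u = x m) (n : ℕ) :
    Admissible O k (x n) Y c := by
  intro u hu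
  obtain ⟨hY, hent, m, rfl⟩ := h u hu
  exact ⟨hY, hent, (le_total n m).imp (hx.mono ·) (hx.mono ·)⟩

lemma exists_lift_announcer (hk : k.bodd = false) {σ : Strategy (unravelling O k)}
    {x : ℕ → T.Node} (hx : T.IsPlay x) (hσ : Consistent false (pushStrategy σ false) x) :
    ∃ y, (unravelling O k).IsPlay y ∧ Consistent false σ y ∧
      (unravellingHom O k).Lifts k false y x := by
  set Y := announcement σ (x k) with hY
  obtain ⟨c, hhit, hnone, hsome⟩ :=
    exists_eventual_hit O k hx (Z := entries O k ∩ Y) Set.inter_subset_left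
  have ha := admissible_of_mem hx fun u hu ↦
    ⟨(hsome u hu).1.2, (hsome u hu).1.1, (hsome u hu).2⟩
  refine ⟨_, isPlay_annotate hx ha, consistent_annotate hx hσ ha (fun _ ↦ ?_) (fun h ↦ ?_)
    fun n hn ↦ (hhit n).imp (fun h ↦ ?_) id, lifts_annotate hx ha fun hc n hn ↦ ?_⟩
  · exact (announcement_eq hx le_rfl Y c).symm
  · rw [Nat.bodd_succ, hk] at h
    cases h
  · rw [guess, if_neg Bool.false_ne_true, announcement_eq hx hn.le,
      ← announcement_eq hx le_rfl ∅ none, ← hY, h]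
  · exact decide_eq_false fun hnY ↦ hnone hc n ⟨hn, hnY⟩

lemma exists_lift_challenger (hk : k.bodd = false) {σ : Strategy (unravelling O k)}
    {x : ℕ → T.Node} (hx : T.IsPlay x) (hσ : Consistent true (pushStrategy σ true) x) :
    ∃ y, (unravelling O k).IsPlay y ∧ Consistent true σ y ∧
      (unravellingHom O k).Lifts k true y x := by
  set r := reply σ (x (k + 1)) with hr
  obtain ⟨c, hhit, hnone, hsome⟩ :=
    exists_eventual_hit O k hx (Z := challenged O k r) (Set.sep_subset _ _)
  have hmem : ∀ u ∈ c, u ∈ announcementFor O k r c := by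
    rintro u ⟨⟩
    exact (announcementFor_some (hsome u rfl).1).1
  have ha := admissible_of_mem hx fun u hu ↦ ⟨hmem u hu, (hsome u hu).1.1, (hsome u hu).2⟩
  have hreply : ∀ n > k, reply σ (x n) = r := fun n hn ↦
    funext fun Y ↦ (reply_eq hx hn Y none).trans (reply_eq hx k.lt_succ_self Y none).symm
  refine ⟨_, isPlay_annotate hx ha, consistent_annotate hx hσ ha (fun h ↦ ?_) (fun _ ↦ ?_)
    fun n hn ↦ (hhit n).imp (fun h ↦ ?_) id, lifts_annotate hx ha fun hc n _ ↦ ?_⟩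
  · cases hk.symm.trans h
  · rw [← reply_eq hx k.lt_succ_self, ← hr]
    exact apply_announcementFor (fun _ _ ↦ mem_of_mem_reply hx) fun u hu ↦ (hsome u hu).1
  · rw [guess, if_pos rfl, hreply n hn, h]
  · subst hc
    exact decide_eq_true (hnone rfl n)

variable (O k) in
/-- The unravelling is a covering. The announcer has to be player I, hence the parity of `k`. -/
noncomputable def unravellingCover (hk : k.bodd = false) : Cover (unravelling O k) T k where
  toHom := unravellingHom O k
  inj p q hp h := by
    have hpos : p.pos = q.pos := h
    rw [p.eq_annotate_of_level_le hp ∅ none, hpos]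
    exact (q.eq_annotate_of_level_le (hpos ▸ hp) ∅ none).symm
  surj p _ := ⟨annotate O k p ∅ none, rfl⟩
  lost_eq q hq := by
    refine AnnotatedNode.lost_of_violation_eq_none
      (Option.eq_none_iff_forall_ne_some.2 fun v hv ↦ ?_)
    obtain ⟨-, ⟨hent, -⟩, hle⟩ := AnnotatedNode.violation_eq_some.1 hv
    have := (hent.2.trans_le (level_mono hle)).trans_le hq
    omega
  push i σ := pushStrategy σ i
  push_congr i σ τ n h p hp := pushStrategy_congr σ h i hp
  push_apply i σ q hq := by
    have hann := q.eq_annotate_of_level_le hq.le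
    exact congrArg (fun r ↦ (move σ r).pos) (hann _ _).symm
  exists_lift i σ x hx hσ :=
    match i with
    | false => exists_lift_announcer hk hx hσ
    | true => exists_lift_challenger hk hx hσ

lemma exists_mem_entries {x : ℕ → T.Node} (hx : T.IsPlay x) {n : ℕ} (hn : x n ∈ O)
    (hk : x (k + 2) ∉ O) : ∃ m, x m ∈ entries O k := by
  have hex : ∃ m, x m ∈ O := ⟨n, hn⟩
  refine ⟨Nat.find hex, ⟨Nat.find_spec hex, fun w hw hle ↦ ?_⟩, ?_⟩
  · rw [hx.eq_of_le hle] at hw ⊢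
    exact hx.mono (Nat.find_min' hex hw)
  · rw [hx.level_eq]
    by_contra! h
    exact hk (O.upper (hx.mono h) (Nat.find_spec hex))

lemma challenge_eq_of_isPlay {y : ℕ → AnnotatedNode O k} (hy : (unravelling O k).IsPlay y)
    {n : ℕ} (hn : k + 2 ≤ n) : (y n).challenge = (y (k + 2)).challenge := by
  induction n, hn using Nat.le_induction with
  | base => rfl
  | succ n hn ih =>
    have hl : T.level (y (n + 1)).pos = n + 1 := hy.level_eq (n + 1)
    have hp : (y (n + 1)).parent = y n := hy.parent_eq n
    rw [← ih, ← hp, AnnotatedNode.challenge_parent (by omega)]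

lemma exists_pos_mem_iff {y : ℕ → AnnotatedNode O k} (hy : (unravelling O k).IsPlay y)
    (hlost : ∀ n, (y n).lost = none) :
    (∃ n, (y n).pos ∈ O) ↔ (y (k + 2)).pos ∈ O ∨ (y (k + 2)).challenge ≠ none := by
  have hx : T.IsPlay fun n ↦ (y n).pos := (unravellingHom O k).isPlay hy
  constructor
  · rintro ⟨n, hn⟩
    by_contra! ⟨hpos, hchal⟩
    obtain ⟨m, hm⟩ := exists_mem_entries hx hn hpos
    have hkm : k + 2 < m := hm.2.trans_eq (hx.level_eq m)
    have hviol : (y m).violation = some (y m).pos := AnnotatedNode.violation_eq_some.2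
      ⟨(challenge_eq_of_isPlay hy hkm.le).trans hchal,
        ⟨hm, AnnotatedNode.lost_pos_eq_none (hlost m)⟩, le_rfl⟩
    cases (hlost m).symm.trans (AnnotatedNode.lost_of_violation_eq_some hviol)
  · rintro (h | h)
    · exact ⟨_, h⟩
    obtain ⟨u, hu⟩ := Option.ne_none_iff_exists'.1 h
    have hent := ((y (k + 2)).admissible u hu).2.1
    have hu' := (challenge_eq_of_isPlay hy hent.2.le).trans hu
    have hl : T.level (y (T.level u)).pos = T.level u := hx.level_eq _
    refine ⟨T.level u, ?_⟩
    obtain ⟨-, -, hle | hle⟩ := (y (T.level u)).admissible u hu'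
    · rw [eq_of_le_of_level_le hle hl.ge]
      exact hent.1.1
    · rw [← eq_of_le_of_level_le hle hl.le]
      exact hent.1.1

end Cover

end Unravelling

end GameForest

namespace GameForest

/-! ### Inverse limits of coverings -/

/-- A tower of coverings `⋯ → tree 2 → tree 1 → tree 0`, the `i`-th of which is a
`(k + i)`-covering, so that the forests stabilize at every level. -/
structure CoverSeq (k : ℕ) : Type (u + 1) where
  tree : ℕ → GameForest.{u}
  cover : ∀ i, Cover (tree (i + 1)) (tree i) (k + i)

namespace CoverSeq

variable {k : ℕ}

/-- A node of the inverse limit: a coherent choice of a node of every forest of the tower. -/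
@[ext]
structure Thread (X : CoverSeq.{u} k) : Type u where
  node : ∀ j, (X.tree j).Node
  cover_node : ∀ j, X.cover j (node (j + 1)) = node j

/-- The tower without its lowest forest. -/
def tail (X : CoverSeq.{u} k) : CoverSeq.{u} (k + 1) where
  tree i := X.tree (i + 1)
  cover i := (X.cover (i + 1)).weaken (by omega)

namespace Thread

lemma exists_node_zero_eq (X : CoverSeq.{u} k) (p : (X.tree 0).Node)
    (hp : (X.tree 0).level p ≤ k) : ∃ t : X.Thread, t.node 0 = p := by
  have hstep : ∀ j (q : {q : (X.tree j).Node // (X.tree j).level q ≤ k}),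
      ∃ r : {r : (X.tree (j + 1)).Node // (X.tree (j + 1)).level r ≤ k},
        X.cover j r.1 = q.1 := by
    rintro j ⟨q, hq⟩
    obtain ⟨r, rfl⟩ := (X.cover j).surj q (hq.trans (Nat.le_add_right k j))
    exact ⟨⟨r, by rwa [← (X.cover j).level_toFun]⟩, rfl⟩
  choose next hnext using hstep
  let t : ∀ j, {q : (X.tree j).Node // (X.tree j).level q ≤ k} :=
    Nat.rec ⟨p, hp⟩ fun j q ↦ next j q
  exact ⟨⟨fun j ↦ (t j).1, fun j ↦ hnext j (t j)⟩, rfl⟩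

lemma exists_node_eq (X : CoverSeq.{u} k) (j : ℕ) (p : (X.tree j).Node)
    (hp : (X.tree j).level p ≤ k + j) : ∃ t : X.Thread, t.node j = p := by
  induction j generalizing k with
  | zero => exact exists_node_zero_eq X p hp
  | succ j ih =>
    obtain ⟨t, ht⟩ := ih X.tail p (hp.trans_eq (by omega))
    refine ⟨⟨fun i ↦ Nat.casesOn i (X.cover 0 (t.node 0)) t.node, fun i ↦ ?_⟩, ht⟩
    cases i with
    | zero => rfl
    | succ i => exact t.cover_node i

variable {X : CoverSeq.{u} k}

lemma level_node (t : X.Thread) (j : ℕ) :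
    (X.tree j).level (t.node j) = (X.tree 0).level (t.node 0) := by
  induction j with
  | zero => rfl
  | succ j ih => rw [← (X.cover j).level_toFun, t.cover_node, ih]

lemma eq_of_node_eq {t s : X.Thread} {j : ℕ} (hl : (X.tree 0).level (t.node 0) ≤ k + j)
    (h : t.node j = s.node j) : t = s := by
  have hup : ∀ i, j ≤ i → t.node i = s.node i := by
    intro i hi
    induction i, hi using Nat.le_induction with
    | base => exact h
    | succ i hi ih =>
      refine (X.cover i).inj _ _ (by rw [level_node]; omega) ?_
      exact (t.cover_node i).trans (ih.trans (s.cover_node i).symm)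
  have hdown : ∀ d i, t.node (i + d) = s.node (i + d) → t.node i = s.node i := by
    intro d i
    induction d with
    | zero => exact id
    | succ d ih =>
      intro h
      exact ih (by rw [← t.cover_node, ← s.cover_node]; exact congrArg _ h)
  ext i
  exact hdown j i (hup _ (Nat.le_add_left j i))

lemma lost_node (t : X.Thread) {i j : ℕ} (hl : (X.tree 0).level (t.node 0) ≤ k + i)
    (hij : i ≤ j) : (X.tree j).lost (t.node j) = (X.tree i).lost (t.node i) := by
  induction j, hij using Nat.le_induction with
  | base => rfl
  | succ j _ ih =>
    rw [(X.cover j).lost_eq _ (by rw [level_node]; omega), t.cover_node, ih]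

lemma lost_node_eq_none (t : X.Thread) {i j : ℕ} (hij : i ≤ j)
    (h : (X.tree j).lost (t.node j) = none) : (X.tree i).lost (t.node i) = none := by
  induction j, hij using Nat.le_induction with
  | base => exact h
  | succ j _ ih => exact ih (by rw [← t.cover_node]; exact (X.cover j).lost_toFun _ h)

/-- The thread of the parents. -/
def parent (t : X.Thread) : X.Thread where
  node j := (X.tree j).parent (t.node j)
  cover_node j := by rw [(X.cover j).toFun_parent, t.cover_node]

lemma level_parent (t : X.Thread) :
    (X.tree 0).level (t.parent.node 0) = (X.tree 0).level (t.node 0) - 1 :=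
  (X.tree 0).level_parent _

lemma exists_parent_eq (t : X.Thread) : ∃ s : X.Thread,
    (X.tree 0).level (s.node 0) = (X.tree 0).level (t.node 0) + 1 ∧ s.parent = t := by
  set n := (X.tree 0).level (t.node 0)
  obtain ⟨q, hq, hqt⟩ := (X.tree (n + 1)).exists_child (t.node (n + 1))
  rw [level_node] at hq
  obtain ⟨s, rfl⟩ := exists_node_eq X (n + 1) q (by omega)
  rw [level_node] at hq
  exact ⟨s, hq, eq_of_node_eq (by rw [level_parent]; omega) hqt⟩

end Thread

/-- The inverse limit of the tower. A node of level `n` is won or lost as in `tree n`, from which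
stage on the tower is constant at level `n`. -/
def limit (X : CoverSeq.{u} k) : GameForest.{u} where
  Node := X.Thread
  level t := (X.tree 0).level (t.node 0)
  parent := Thread.parent
  lost t := (X.tree ((X.tree 0).level (t.node 0))).lost (t.node _)
  level_parent t := t.level_parent
  exists_child t := t.exists_parent_eq
  lost_of_parent t i h := by
    rw [← Thread.lost_node _ (by omega) (t.level_parent.trans_le (Nat.sub_le _ 1))] at h
    exact (X.tree _).lost_of_parent _ i h

/-- The projection of the inverse limit to the `j`-th forest. -/
def proj (X : CoverSeq.{u} k) (j : ℕ) : Hom X.limit (X.tree j) where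
  toFun := fun t : X.Thread ↦ t.node j
  level_toFun := fun t : X.Thread ↦ t.level_node j
  toFun_parent _ := rfl
  lost_toFun := fun (t : X.Thread) h ↦ by
    set n := (X.tree 0).level (t.node 0)
    refine t.lost_node_eq_none (le_max_left j n) ?_
    rw [t.lost_node (by omega) (le_max_right j n)]
    exact h

variable {X : CoverSeq.{u} k}

lemma cover_proj (j : ℕ) (p : X.limit.Node) : X.cover j (X.proj (j + 1) p) = X.proj j p :=
  Thread.cover_node (X := X) p j

lemma proj_inj {j : ℕ} {p q : X.limit.Node} (hp : X.limit.level p ≤ k + j)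
    (h : X.proj j p = X.proj j q) : p = q :=
  Thread.eq_of_node_eq (X := X) hp h

lemma exists_proj_eq {j : ℕ} {p : (X.tree j).Node} (hp : (X.tree j).level p ≤ k + j) :
    ∃ q, X.proj j q = p :=
  Thread.exists_node_eq X j p hp

lemma lost_eq_lost_proj {j : ℕ} {p : X.limit.Node} (hp : X.limit.level p ≤ k + j) :
    X.limit.lost p = (X.tree j).lost (X.proj j p) := by
  rcases le_total (X.limit.level p) j with h | h
  · exact (Thread.lost_node (X := X) p (Nat.le_add_left _ k) h).symm
  · exact Thread.lost_node (X := X) p hp h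

section Push

/-- The strategy on the `j`-th forest which copies `σ` as far as level `k + j`. -/
noncomputable def projStrategy (σ : Strategy X.limit) (j : ℕ) : Strategy (X.tree j) where
  next p := if h : (X.tree j).level p ≤ k + j then X.proj j (σ (exists_proj_eq h).choose)
    else ((X.tree j).exists_child p).choose
  level_next p := by
    split_ifs with h
    · rw [(X.proj j).level_toFun, σ.level_next, ← (X.proj j).level_toFun,
        (exists_proj_eq h).choose_spec]
    · exact ((X.tree j).exists_child p).choose_spec.1
  parent_next p := by
    split_ifs with h
    · rw [← (X.proj j).toFun_parent, σ.parent_next, (exists_proj_eq h).choose_spec]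
    · exact ((X.tree j).exists_child p).choose_spec.2

lemma projStrategy_proj (σ : Strategy X.limit) {j : ℕ} {p : X.limit.Node}
    (hp : X.limit.level p ≤ k + j) : projStrategy σ j (X.proj j p) = X.proj j (σ p) := by
  have h : (X.tree j).level (X.proj j p) ≤ k + j := by rwa [(X.proj j).level_toFun]
  have hchoose : (exists_proj_eq h).choose = p :=
    (proj_inj hp (exists_proj_eq h).choose_spec.symm).symm
  exact (dif_pos h).trans (by rw [hchoose])

lemma projStrategy_congr {σ τ : Strategy X.limit} {n : ℕ}
    (h : ∀ p, X.limit.level p < n → σ p = τ p) (j : ℕ) (p : (X.tree j).Node)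
    (hp : (X.tree j).level p < n) : projStrategy σ j p = projStrategy τ j p := by
  by_cases hl : (X.tree j).level p ≤ k + j
  · obtain ⟨q, rfl⟩ := exists_proj_eq hl
    rw [(X.proj j).level_toFun] at hl hp
    rw [projStrategy_proj σ hl, projStrategy_proj τ hl, h q hp]
  · simp only [projStrategy, dif_neg hl]

/-- The strategy `projStrategy σ (j + m)` pushed down `m` times. -/
noncomputable def iterPush (i : Bool) (σ : Strategy X.limit) : ℕ → ∀ j, Strategy (X.tree j)
  | 0, j => projStrategy σ j
  | m + 1, j => (X.cover j).push i (iterPush i σ m (j + 1))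

lemma iterPush_succ (i : Bool) (σ : Strategy X.limit) (m j : ℕ) (p : (X.tree j).Node)
    (hp : (X.tree j).level p < k + (j + m)) :
    iterPush i σ (m + 1) j p = iterPush i σ m j p := by
  induction m generalizing j with
  | zero =>
    obtain ⟨q, rfl⟩ := exists_proj_eq hp.le
    rw [(X.proj j).level_toFun] at hp
    calc (X.cover j).push i (projStrategy σ (j + 1)) (X.proj j q)
        = (X.cover j).push i (projStrategy σ (j + 1)) (X.cover j (X.proj (j + 1) q)) := by
          rw [cover_proj]
      _ = X.cover j (projStrategy σ (j + 1) (X.proj (j + 1) q)) :=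
          (X.cover j).push_apply _ _ _ (by rw [(X.proj _).level_toFun]; exact hp)
      _ = X.cover j (X.proj (j + 1) (σ q)) := by rw [projStrategy_proj σ (by omega)]
      _ = X.proj j (σ q) := cover_proj j _
      _ = projStrategy σ j (X.proj j q) := (projStrategy_proj σ hp.le).symm
  | succ m ih =>
    exact (X.cover j).push_congr i _ _ _ (fun q hq ↦ ih (j + 1) q (by omega)) p hp

lemma iterPush_eq_of_le (i : Bool) (σ : Strategy X.limit) {m m' : ℕ} (hm : m ≤ m') (j : ℕ)
    (p : (X.tree j).Node) (hp : (X.tree j).level p < k + (j + m)) :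
    iterPush i σ m' j p = iterPush i σ m j p := by
  induction m', hm using Nat.le_induction with
  | base => rfl
  | succ m' hm ih => rw [iterPush_succ _ _ _ _ _ (by omega), ih]

lemma iterPush_congr (i : Bool) {σ τ : Strategy X.limit} {n : ℕ}
    (h : ∀ p, X.limit.level p < n → σ p = τ p) (m j : ℕ) (p : (X.tree j).Node)
    (hp : (X.tree j).level p < n) : iterPush i σ m j p = iterPush i τ m j p := by
  induction m generalizing j with
  | zero => exact projStrategy_congr h j p hp
  | succ m ih => exact (X.cover j).push_congr i _ _ n (fun q hq ↦ ih (j + 1) q hq) p hp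

/-- The eventual value of `iterPush i σ m j` as `m` grows. -/
noncomputable def pushLimit (i : Bool) (σ : Strategy X.limit) (j : ℕ) : Strategy (X.tree j) where
  next p := iterPush i σ ((X.tree j).level p + 1) j p
  level_next _ := Strategy.level_next _ _
  parent_next _ := Strategy.parent_next _ _

lemma pushLimit_eq_iterPush (i : Bool) (σ : Strategy X.limit) {m j : ℕ} {p : (X.tree j).Node}
    (hp : (X.tree j).level p < m) : pushLimit i σ j p = iterPush i σ m j p :=
  (iterPush_eq_of_le i σ hp j p (by omega)).symm

lemma pushLimit_proj (i : Bool) (σ : Strategy X.limit) {j : ℕ} {p : X.limit.Node}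
    (hp : X.limit.level p < k + j) : pushLimit i σ j (X.proj j p) = X.proj j (σ p) :=
  (iterPush_eq_of_le i σ (Nat.zero_le _) j _ (by rwa [(X.proj j).level_toFun])).trans
    (projStrategy_proj σ hp.le)

lemma push_pushLimit (i : Bool) (σ : Strategy X.limit) (j : ℕ) :
    (X.cover j).push i (pushLimit i σ (j + 1)) = pushLimit i σ j := by
  ext p
  rw [pushLimit_eq_iterPush i σ (m := (X.tree j).level p + 1 + 1) (by omega)]
  exact (X.cover j).push_congr i _ _ _ (fun q hq ↦ pushLimit_eq_iterPush i σ hq) p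
    (Nat.lt_succ_self _)

end Push

section Lift

variable {i : Bool} {s : ∀ j, ℕ → (X.tree j).Node}

lemma exists_limit_isPlay (hs : ∀ j, (X.tree j).IsPlay (s j))
    (hl : ∀ j, (X.cover j).Lifts (k + j) i (s (j + 1)) (s j)) :
    ∃ y, X.limit.IsPlay y ∧ ∀ n j, n ≤ k + j → X.proj j (y n) = s j n := by
  have hnode : ∀ n, ∃ p, ∀ j, n ≤ k + j → X.proj j p = s j n := by
    intro n
    obtain ⟨p, hp⟩ := exists_proj_eq (X := X) (j := n - k) (p := s (n - k) n)
      (by rw [(hs _).level_eq]; omega)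
    refine ⟨p, fun j hj ↦ ?_⟩
    induction j, (show n - k ≤ j by omega) using Nat.le_induction with
    | base => exact hp
    | succ j hle ih =>
      have hnj : n ≤ k + j := by omega
      refine (X.cover j).inj _ _ ?_ ?_
      · rw [(X.proj _).level_toFun, ← (X.proj j).level_toFun, ih hnj, (hs j).level_eq]
        exact hnj
      · exact (cover_proj j p).trans
          ((ih hnj).trans ((hl j).apply_eq (hs _) (hs j) hnj).symm)
  choose y hy using hnode
  have hlevel : ∀ n, X.limit.level (y n) = n := fun n ↦ by
    rw [← (X.proj n).level_toFun, hy n n (Nat.le_add_left n k), (hs n).level_eq]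
  refine ⟨y, fun n ↦ ⟨hlevel n, proj_inj (j := n + 1) ?_ ?_⟩, hy⟩
  · rw [X.limit.level_parent, hlevel]
    omega
  · rw [(X.proj _).toFun_parent, hy _ _ (Nat.le_add_left _ k), hy n _ (by omega),
      (hs _).parent_eq]

lemma consistent_limit {σ : Strategy X.limit} {y : ℕ → X.limit.Node}
    (hs : ∀ j, Consistent i (pushLimit i σ j) (s j)) (hy : X.limit.IsPlay y)
    (hys : ∀ n j, n ≤ k + j → X.proj j (y n) = s j n) : Consistent i σ y := by
  intro n hn
  refine proj_inj (j := n + 1) (by rw [hy.level_eq]; omega) ?_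
  rw [hys _ _ (Nat.le_add_left _ k), hs _ n hn, ← hys n _ (by omega),
    pushLimit_proj i σ (by rw [hy.level_eq]; omega)]

/-- The composition `tree j → ⋯ → tree 0`. -/
def toBase (X : CoverSeq.{u} k) : ∀ j, Hom (X.tree j) (X.tree 0)
  | 0 => Hom.refl _
  | j + 1 => (X.toBase j).comp (X.cover j).toHom

lemma toBase_proj (j : ℕ) (p : X.limit.Node) : X.toBase j (X.proj j p) = X.proj 0 p := by
  induction j with
  | zero => rfl
  | succ j ih => exact (congrArg (X.toBase j) (cover_proj j p)).trans ih

lemma lifts_toBase (hs : ∀ j, (X.tree j).IsPlay (s j))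
    (hl : ∀ j, (X.cover j).Lifts (k + j) i (s (j + 1)) (s j)) (j : ℕ) :
    (X.toBase j).Lifts k i (s j) (s 0) := by
  induction j with
  | zero => exact .inl fun n ↦ ⟨rfl, rfl⟩
  | succ j ih =>
    exact ih.comp ((hl j).mono (Nat.le_add_right k j)) (hs _) (hs j) (hs 0)

lemma exists_lost_of_le (hs : ∀ j, (X.tree j).IsPlay (s j))
    (hl : ∀ j, (X.cover j).Lifts (k + j) i (s (j + 1)) (s j)) {j j' n : ℕ} (hj : j ≤ j')
    (hn : k ≤ n) (hlost : (X.tree j).lost (s j n) = some i)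
    (hbase : X.toBase j (s j n) = s 0 n) :
    ∃ m ≤ n, k ≤ m ∧ (X.tree j').lost (s j' m) = some i ∧ X.toBase j' (s j' m) = s 0 m := by
  induction j', hj using Nat.le_induction with
  | base => exact ⟨n, le_rfl, hn, hlost, hbase⟩
  | succ j' _ ih =>
    obtain ⟨m, hmn, hm, hlost', hbase'⟩ := ih
    obtain ⟨m', hm', hk, hlost'', hcover⟩ := (hl j').exists_lost (hs _) (hs _) hlost'
    refine ⟨m', hm'.trans hmn, by omega, hlost'', ?_⟩
    exact (congrArg (X.toBase j') hcover).trans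
      ((X.toBase j').eq_of_le (hs _) (hs 0) hm' hbase')

lemma lifts_limit (hs : ∀ j, (X.tree j).IsPlay (s j))
    (hl : ∀ j, (X.cover j).Lifts (k + j) i (s (j + 1)) (s j)) {y : ℕ → X.limit.Node}
    (hy : X.limit.IsPlay y) (hys : ∀ n j, n ≤ k + j → X.proj j (y n) = s j n) :
    (X.proj 0).Lifts k i y (s 0) := by
  have hproj : ∀ n j, n ≤ k + j → X.proj 0 (y n) = X.toBase j (s j n) := fun n j h ↦ by
    rw [← toBase_proj j, hys n j h]
  have hlost : ∀ n j, n ≤ k + j → X.limit.lost (y n) = (X.tree j).lost (s j n) := fun n j h ↦ by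
    rw [lost_eq_lost_proj (by rwa [hy.level_eq]), hys n j h]
  by_cases hexact : ∀ j n, X.toBase j (s j n) = s 0 n ∧
      (X.tree j).lost (s j n) = (X.tree 0).lost (s 0 n)
  · exact .inl fun n ↦ ⟨(hproj n n (by omega)).trans (hexact n n).1,
      (hlost n n (by omega)).trans (hexact n n).2⟩
  · obtain ⟨j, hj⟩ := not_forall.1 hexact
    obtain ⟨n, hn, hlost', hbase⟩ := (lifts_toBase hs hl j).resolve_left hj
    obtain ⟨m, hm, hk, hlost'', hbase'⟩ :=
      exists_lost_of_le hs hl (le_max_left j n) hn hlost' hbase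
    have hle : m ≤ k + max j n := by omega
    exact .inr ⟨m, hk, (hlost m _ hle).trans hlost'', (hproj m _ hle).trans hbase'⟩

lemma exists_lift_limit (i : Bool) (σ : Strategy X.limit) (x : ℕ → (X.tree 0).Node)
    (hx : (X.tree 0).IsPlay x) (hc : Consistent i (pushLimit i σ 0) x) :
    ∃ y, X.limit.IsPlay y ∧ Consistent i σ y ∧ (X.proj 0).Lifts k i y x := by
  have hstep : ∀ j (z : {z // (X.tree j).IsPlay z ∧ Consistent i (pushLimit i σ j) z}),
      ∃ w : {w // (X.tree (j + 1)).IsPlay w ∧ Consistent i (pushLimit i σ (j + 1)) w},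
        (X.cover j).Lifts (k + j) i w.1 z.1 := by
    rintro j ⟨z, hz, hzc⟩
    rw [← push_pushLimit] at hzc
    obtain ⟨w, hw, hwc, hl⟩ := (X.cover j).exists_lift i _ z hz hzc
    exact ⟨⟨w, hw, hwc⟩, hl⟩
  choose next hnext using hstep
  let s : ∀ j, {z // (X.tree j).IsPlay z ∧ Consistent i (pushLimit i σ j) z} :=
    Nat.rec ⟨x, hx, hc⟩ fun j z ↦ next j z
  have hs : ∀ j, (X.tree j).IsPlay (s j).1 := fun j ↦ (s j).2.1
  have hl : ∀ j, (X.cover j).Lifts (k + j) i (s (j + 1)).1 (s j).1 := fun j ↦ hnext j (s j)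
  obtain ⟨y, hy, hys⟩ := exists_limit_isPlay hs hl
  exact ⟨y, hy, consistent_limit (fun j ↦ (s j).2.2) hy hys, lifts_limit hs hl hy hys⟩

end Lift

/-- The inverse limit covers the lowest forest of the tower. -/
noncomputable def limitCover (X : CoverSeq.{u} k) : Cover X.limit (X.tree 0) k where
  toHom := X.proj 0
  inj _ _ hp h := proj_inj hp h
  surj _ hp := exists_proj_eq hp
  lost_eq _ hp := lost_eq_lost_proj hp
  push i σ := pushLimit i σ 0
  push_congr i _ _ _ h p hp := iterPush_congr i h _ 0 p hp
  push_apply i σ _ hp := pushLimit_proj i σ hp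
  exists_lift := exists_lift_limit

end CoverSeq

end GameForest

namespace GameForest

/-! ### Unravelable sets -/

variable {R S T : GameForest.{u}} {k : ℕ}

/-- The covering `C` unravels `A`: for the plays upstairs that are not lost at a finite stage,
whether they lie over `A` is decided at some fixed level. -/
def Cover.Unravels (C : Cover S T k) (A : Set (ℕ → T.Node)) : Prop :=
  ∃ (n : ℕ) (P : Set S.Node), ∀ x, S.IsPlay x → (∀ m, S.lost (x m) = none) →
    (C ∘ x ∈ A ↔ x n ∈ P)

lemma Cover.Unravels.compl {C : Cover S T k} {A : Set (ℕ → T.Node)} (h : C.Unravels A) :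
    C.Unravels Aᶜ :=
  have ⟨n, P, hP⟩ := h
  ⟨n, Pᶜ, fun x hx hlost ↦ not_congr (hP x hx hlost)⟩

lemma Cover.Unravels.comp {C : Cover S T k} {D : Cover R S k} {A : Set (ℕ → T.Node)}
    {B : Set (ℕ → S.Node)} (hD : D.Unravels B)
    (h : ∀ x, S.IsPlay x → (∀ m, S.lost (x m) = none) → (x ∈ B ↔ C ∘ x ∈ A)) :
    (C.comp D).Unravels A := by
  obtain ⟨n, P, hP⟩ := hD
  exact ⟨n, P, fun x hx hlost ↦
    (h _ (D.isPlay hx) fun m ↦ D.lost_toFun _ (hlost m)).symm.trans (hP x hx hlost)⟩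

lemma exists_unravels_upperSet (T : GameForest.{u}) (k : ℕ) (O : UpperSet T.Node) :
    ∃ (S : GameForest.{u}) (C : Cover S T k), C.Unravels {x | ∃ n, x n ∈ O} := by
  have hodd : (2 * k).bodd = false := by simp
  refine ⟨_, (unravellingCover O (2 * k) hodd).weaken (by omega), 2 * k + 2,
    {p : AnnotatedNode O (2 * k) | p.pos ∈ O ∨ p.challenge ≠ none}, fun x hx hlost ↦ ?_⟩
  exact exists_pos_mem_iff hx hlost

/-- The set `A` of plays of `T` is hereditarily unravelable: its preimage in any forest over `T` is
unravelled by `k`-coverings for all `k`. -/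
def IsUnravelable (T : GameForest.{u}) (A : Set (ℕ → T.Node)) : Prop :=
  ∀ ⦃S : GameForest.{u}⦄ (f : Hom S T) (k : ℕ), ∃ (R : GameForest.{u}) (C : Cover R S k),
    C.Unravels {x | f ∘ x ∈ A}

namespace IsUnravelable

variable {A : Set (ℕ → T.Node)}

lemma congr {B : Set (ℕ → T.Node)} (hA : IsUnravelable T A)
    (h : ∀ x, T.IsPlay x → (x ∈ A ↔ x ∈ B)) : IsUnravelable T B := fun _ f k ↦
  have ⟨R, C, n, P, hP⟩ := hA f k
  ⟨R, C, n, P, fun x hx hlost ↦ (h _ ((f.comp C.toHom).isPlay hx)).symm.trans (hP x hx hlost)⟩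

lemma upperSet (O : UpperSet T.Node) : IsUnravelable T {x | ∃ n, x n ∈ O} := fun S f k ↦
  exists_unravels_upperSet S k ⟨f ⁻¹' O, fun _ _ hpq hp ↦ O.upper (f.mono hpq) hp⟩

lemma compl (h : IsUnravelable T A) : IsUnravelable T Aᶜ := fun _ f k ↦
  have ⟨R, C, hC⟩ := h f k
  ⟨R, C, hC.compl⟩

end IsUnravelable

lemma CoverSeq.exists_upperSet {X : CoverSeq.{u} k} {A : ℕ → Set (ℕ → (X.tree 0).Node)}
    (h : ∀ i, (X.cover i).Unravels {x | X.toBase i ∘ x ∈ A i}) :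
    ∃ O : UpperSet X.limit.Node, ∀ x, X.limit.IsPlay x → (∀ m, X.limit.lost (x m) = none) →
      ((∃ n, x n ∈ O) ↔ X.proj 0 ∘ x ∈ ⋃ i, A i) := by
  choose n P hP using h
  have hmem : ∀ x, X.limit.IsPlay x → (∀ m, X.limit.lost (x m) = none) →
      ∀ i, X.proj 0 ∘ x ∈ A i ↔ X.proj (i + 1) (x (n i)) ∈ P i := by
    intro x hx hlost i
    have hcomp : X.proj 0 ∘ x = X.toBase i ∘ X.cover i ∘ X.proj (i + 1) ∘ x := by
      funext m
      exact (toBase_proj i (x m)).symm.trans (congrArg (X.toBase i) (cover_proj i (x m)).symm)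
    rw [hcomp]
    exact hP i _ ((X.proj (i + 1)).isPlay hx) fun m ↦ (X.proj (i + 1)).lost_toFun _ (hlost m)
  refine ⟨⟨{p | ∃ i, ∃ v ≤ p, X.limit.level v = n i ∧ X.proj (i + 1) v ∈ P i},
    fun p q hpq ⟨i, v, hv, h⟩ ↦ ⟨i, v, hv.trans hpq, h⟩⟩, fun x hx hlost ↦ ?_⟩
  rw [Set.mem_iUnion]
  constructor
  · rintro ⟨m, i, v, hv, hl, hvP⟩
    rw [hx.eq_of_le hv, hl] at hvP
    exact ⟨i, (hmem x hx hlost i).2 hvP⟩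
  · rintro ⟨i, hi⟩
    exact ⟨n i, i, x (n i), le_rfl, hx.level_eq _, (hmem x hx hlost i).1 hi⟩

lemma exists_coverSeq_unravels {A : ℕ → Set (ℕ → T.Node)} (h : ∀ i, IsUnravelable T (A i))
    (f : Hom S T) (k : ℕ) : ∃ (X : CoverSeq.{u} k) (C : Cover (X.tree 0) S k),
      ∀ i, (X.cover i).Unravels {x | f ∘ C ∘ X.toBase i ∘ x ∈ A i} := by
  choose R D hD using fun (i : ℕ) (X : (S : GameForest.{u}) × Hom S T) ↦ h i X.2 (k + i)
  let X : ℕ → (S : GameForest.{u}) × Hom S T :=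
    Nat.rec ⟨S, f⟩ fun i X ↦ ⟨R i X, X.2.comp (D i X).toHom⟩
  let tower : CoverSeq.{u} k := ⟨fun i ↦ (X i).1, fun i ↦ D i (X i)⟩
  have hbase : ∀ i p, (X i).2 p = f (tower.toBase i p) := by
    intro i
    induction i with
    | zero => exact fun _ ↦ rfl
    | succ i ih => exact fun p ↦ ih (D i (X i) p)
  refine ⟨tower, Cover.refl S k, fun i ↦ ?_⟩
  convert hD i (X i) using 4 with x
  exact (funext fun m ↦ hbase i (x m)).symm

lemma IsUnravelable.iUnion {A : ℕ → Set (ℕ → T.Node)} (h : ∀ i, IsUnravelable T (A i)) :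
    IsUnravelable T (⋃ i, A i) := by
  intro S f k
  obtain ⟨X, C, hX⟩ := exists_coverSeq_unravels h f k
  obtain ⟨O, hO⟩ := CoverSeq.exists_upperSet (A := fun i ↦ {x | f ∘ C ∘ x ∈ A i}) hX
  obtain ⟨R, D, hD⟩ := exists_unravels_upperSet X.limit k O
  refine ⟨R, (C.comp X.limitCover).comp D, hD.comp fun x hx hlost ↦ (hO x hx hlost).trans ?_⟩
  rw [Set.mem_iUnion, Set.mem_ofPred_eq, Set.mem_iUnion]
  rfl

end GameForest

namespace GameForest

/-! ### Determinacy of unravelable games -/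

variable {T : GameForest.{u}}

/-- Player `i` has a strategy that, from the node `p` on, forces the play into `D`. -/
def WinsFrom (i : Bool) (D : Set (ℕ → T.Node)) (p : T.Node) : Prop :=
  ∃ σ : Strategy T, ∀ x, T.IsPlay x → x (T.level p) = p →
    (∀ n, T.level p ≤ n → n.bodd = i → x (n + 1) = σ (x n)) → x ∈ D

lemma WinsFrom.of_child {i : Bool} {D : Set (ℕ → T.Node)} {p q : T.Node}
    (hp : (T.level p).bodd = i) (hlevel : T.level q = T.level p + 1) (hparent : T.parent q = p)
    (h : WinsFrom i D q) : WinsFrom i D p := by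
  obtain ⟨σ, hσ⟩ := h
  refine ⟨⟨fun u ↦ if u = p then q else σ u, fun u ↦ ?_, fun u ↦ ?_⟩, fun x hx hxp hc ↦ ?_⟩
  · split_ifs with hu
    exacts [hu ▸ hlevel, σ.level_next u]
  · split_ifs with hu
    exacts [hu ▸ hparent, σ.parent_next u]
  · refine hσ x hx ?_ fun n hn hi ↦ ?_
    · rw [hlevel, hc _ le_rfl hp]
      exact if_pos hxp
    · rw [hc n (by omega) hi]
      refine if_neg fun hnp ↦ ?_
      have := hx.level_eq n
      rw [hnp] at this
      omega

lemma WinsFrom.of_forall_child {i : Bool} {D : Set (ℕ → T.Node)} {p : T.Node}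
    (h : ∀ q, T.level q = T.level p + 1 → T.parent q = p → WinsFrom i D q) : WinsFrom i D p := by
  choose! σ hσ using h
  refine ⟨⟨fun u ↦ σ (anc u (T.level p + 1)) u, fun u ↦ Strategy.level_next _ _,
    fun u ↦ Strategy.parent_next _ _⟩, fun x hx hxp hc ↦ ?_⟩
  have hlevel := hx.level_eq (T.level p + 1)
  refine hσ _ hlevel (by rw [hx.parent_eq, hxp]) x hx (by rw [hlevel]) fun n hn hi ↦ ?_
  rw [hlevel] at hn
  rw [hc n (by omega) hi, ← hx.anc_eq hn]

lemma exists_winsFrom_of_forall_child {D : Bool → Set (ℕ → T.Node)} {p : T.Node}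
    (h : ∀ q, T.level q = T.level p + 1 → T.parent q = p → ∃ i, WinsFrom i (D i) q) :
    ∃ i, WinsFrom i (D i) p := by
  by_cases hp : ∃ q, T.level q = T.level p + 1 ∧ T.parent q = p ∧
      WinsFrom (T.level p).bodd (D (T.level p).bodd) q
  · obtain ⟨q, hlevel, hparent, hq⟩ := hp
    exact ⟨_, .of_child rfl hlevel hparent hq⟩
  · refine ⟨!(T.level p).bodd, .of_forall_child fun q hlevel hparent ↦ ?_⟩
    obtain ⟨i, hi⟩ := h q hlevel hparent
    have hne : i ≠ (T.level p).bodd := by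
      rintro rfl
      exact hp ⟨q, hlevel, hparent, hi⟩
    rwa [← Bool.eq_not.2 hne]

lemma winsFrom_of_forall_not_winsFrom {i : Bool} {D E : Set (ℕ → T.Node)} {p : T.Node}
    (hp : ¬ WinsFrom i D p)
    (h : ∀ x, T.IsPlay x → x (T.level p) = p → (∀ n, T.level p ≤ n → ¬ WinsFrom i D (x n)) →
      x ∈ E) : WinsFrom (!i) E p := by
  have hstep : ∀ u : T.Node, ∃ q, T.level q = T.level u + 1 ∧ T.parent q = u ∧
      ((T.level u).bodd = !i → ¬ WinsFrom i D u → ¬ WinsFrom i D q) := by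
    intro u
    by_cases hu : (T.level u).bodd = (!i) ∧ ¬ WinsFrom i D u
    · by_contra! hcon
      exact hu.2 (.of_forall_child fun q hlevel hparent ↦
        (hcon q hlevel hparent).2.2)
    · obtain ⟨q, hlevel, hparent⟩ := T.exists_child u
      exact ⟨q, hlevel, hparent, fun hi hn ↦ absurd ⟨hi, hn⟩ hu⟩
  choose next hlevel hparent hnext using hstep
  refine ⟨⟨next, hlevel, hparent⟩, fun x hx hxp hc ↦ h x hx hxp fun n hn ↦ ?_⟩
  induction n, hn using Nat.le_induction with
  | base => rwa [hxp]
  | succ n hn ih =>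
    by_cases hi : n.bodd = !i
    · rw [hc n hn hi]
      exact hnext _ (by rw [hx.level_eq, hi]) ih
    · refine fun hw ↦ ih (.of_child ?_ ?_ (hx.parent_eq n) hw)
      · rw [hx.level_eq, Bool.not_eq_not.1 hi]
      · rw [hx.level_eq, hx.level_eq]

/-- The plays won by player `i` when a play that is not lost at a finite stage is won by player I
if its node of level `n` belongs to `P` and by player II otherwise. -/
def winningPlays (n : ℕ) (P : Set T.Node) (i : Bool) : Set (ℕ → T.Node) :=
  {x | (∃ m, T.lost (x m) = some (!i)) ∨
    (∀ m, T.lost (x m) = none) ∧ (x n ∈ P ↔ i = false)}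

lemma winsFrom_of_lost {n : ℕ} {P : Set T.Node} {i : Bool} {p : T.Node}
    (h : T.lost p = some (!i)) : WinsFrom i (winningPlays n P i) p :=
  ⟨Classical.arbitrary _, fun _ _ hxp _ ↦ .inl ⟨T.level p, by rw [hxp, h]⟩⟩

lemma exists_winsFrom_of_level_ge {n : ℕ} {P : Set T.Node} {p : T.Node} (hn : n ≤ T.level p) :
    ∃ i, WinsFrom i (winningPlays n P i) p := by
  obtain ⟨i, hi⟩ : ∃ i, anc p n ∈ P ↔ i = false := ⟨decide (anc p n ∉ P), by simp⟩
  by_cases h : WinsFrom (!i) (winningPlays n P (!i)) p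
  · exact ⟨_, h⟩
  have hwin := winsFrom_of_forall_not_winsFrom (E := winningPlays n P i) h fun x hx hxp hstay ↦ by
    have hne : ∀ m, T.lost (x m) ≠ some i := fun m hm ↦
      hstay (max m (T.level p)) (le_max_right _ _)
        (winsFrom_of_lost (by rw [hx.lost_mono (le_max_left _ _) hm, Bool.not_not]))
    refine or_iff_not_imp_left.2 fun hnot ↦ ⟨fun m ↦ ?_, by rwa [← hx.anc_eq hn, hxp]⟩
    rcases hm : T.lost (x m) with _ | j
    · rfl
    · obtain rfl | hj := eq_or_ne j i
      · exact absurd hm (hne m)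
      · exact absurd ⟨m, by rw [hm, Bool.eq_not.2 hj]⟩ hnot
  exact ⟨i, by rwa [Bool.not_not] at hwin⟩

lemma exists_winsFrom (n : ℕ) (P : Set T.Node) (p : T.Node) :
    ∃ i, WinsFrom i (winningPlays n P i) p := by
  induction hd : n - T.level p generalizing p with
  | zero => exact exists_winsFrom_of_level_ge (by omega)
  | succ d ih => exact exists_winsFrom_of_forall_child fun q hlevel _ ↦ ih q (by omega)

theorem IsUnravelable.determined {A : Set (ℕ → T.Node)} (hA : IsUnravelable T A)
    (hlost : ∀ p, T.lost p = none) {r : T.Node} (hr : T.level r = 0) :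
    ∃ (i : Bool) (σ : Strategy T), ∀ x, T.IsPlay x → x 0 = r → Consistent i σ x →
      (x ∈ A ↔ i = false) := by
  obtain ⟨S, C, n, P, hP⟩ := hA (Hom.refl T) 0
  obtain ⟨r', rfl⟩ := C.surj r hr.le
  rw [C.level_toFun] at hr
  obtain ⟨i, σ, hσ⟩ := exists_winsFrom n P r'
  refine ⟨i, C.push i σ, fun x hx hxr hc ↦ ?_⟩
  obtain ⟨y, hy, hyc, hyx⟩ := C.exists_lift i σ x hx hc
  have hy0 : y 0 = r' :=
    C.inj _ _ (hy.level_eq 0).le ((hyx.apply_eq hy hx le_rfl).trans hxr)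
  have hwon : y ∈ winningPlays n P i := hσ y hy (by rw [hr, hy0]) fun m _ hm ↦ hyc m hm
  rcases hyx with hyx | ⟨m, -, hm, -⟩
  · have hlost' : ∀ m, S.lost (y m) = none := fun m ↦ (hyx m).2.trans (hlost _)
    rcases hwon with ⟨m, hm⟩ | ⟨-, hwon⟩
    · simp only [hlost', reduceCtorEq] at hm
    · rw [← hwon, ← hP y hy hlost']
      exact iff_of_eq (congrArg (· ∈ A) (funext fun m ↦ (hyx m).1).symm)
  · rcases hwon with ⟨m', hm'⟩ | ⟨hwon, -⟩
    · have := (hy.lost_mono (le_max_left m m') hm).symm.trans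
        (hy.lost_mono (le_max_right m m') hm')
      simp at this
    · simp only [hwon, reduceCtorEq] at hm

end GameForest

/-! ### Borel determinacy -/

/-- The positions `PiNat.res x n` of the infinite game in which the players alternately choose the
terms of a sequence `x` in `X`, as lists with the most recent move first. -/
def GameForest.sequences (X : Type u) [Nonempty X] : GameForest.{u} where
  Node := List X
  level := List.length
  parent := List.tail
  lost _ := none
  level_parent _ := List.length_tail
  exists_child p := ⟨Classical.arbitrary X :: p, rfl, rfl⟩
  lost_of_parent _ _ h := h

namespace GameForest

variable {X : Type u} [Nonempty X]

lemma isPlay_sequences_iff {p : ℕ → List X} :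
    (sequences X).IsPlay p ↔ ∃ x, PiNat.res x = p := by
  refine ⟨fun hp ↦ ?_, ?_⟩
  · have hcons : ∀ n, ∃ a, p (n + 1) = a :: p n := fun n ↦ by
      obtain ⟨a, l, hal⟩ := List.exists_cons_of_length_eq_add_one (hp (n + 1)).1
      exact ⟨a, by rw [hal, ← (hp n).2, hal]; rfl⟩
    choose x hx using hcons
    refine ⟨x, funext fun n ↦ ?_⟩
    induction n with
    | zero => exact (List.eq_nil_of_length_eq_zero (hp 0).1).symm
    | succ n ih => rw [PiNat.res_succ, ih, hx]
  · rintro ⟨x, rfl⟩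
    exact fun n ↦ ⟨PiNat.res_length x n, rfl⟩

lemma isUnravelable_image_res_of_isOpen [TopologicalSpace X] [DiscreteTopology X]
    {A : Set (ℕ → X)} (hA : IsOpen A) : IsUnravelable (sequences X) (PiNat.res '' A) := by
  let decided : Set (sequences X).Node := {p | ∀ x, PiNat.res x p.length = p → x ∈ A}
  refine (IsUnravelable.upperSet (upperClosure decided)).congr fun p hp ↦ ?_
  obtain ⟨x, rfl⟩ := isPlay_sequences_iff.1 hp
  refine Iff.trans ?_ PiNat.res_injective.mem_set_image.symm
  constructor
  · rintro ⟨n, v, hv, hvn⟩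
    exact hv x (hp.eq_of_le hvn).symm
  · intro hx
    obtain ⟨-, ⟨z, n, rfl⟩, hxz, hzA⟩ :=
      (PiNat.isTopologicalBasis_cylinders fun _ ↦ X).exists_subset_of_mem_open hx hA
    refine ⟨n, subset_upperClosure fun y hy ↦ hzA ?_⟩
    rw [PiNat.cylinder_eq_res] at hxz ⊢
    exact (PiNat.res_length x n ▸ hy).trans hxz

lemma isUnravelable_image_res [TopologicalSpace X] [DiscreteTopology X] {A : Set (ℕ → X)}
    (hA : MeasurableSet[borel (ℕ → X)] A) : IsUnravelable (sequences X) (PiNat.res '' A) := by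
  induction A, hA using MeasurableSpace.generateFrom_induction with
  | hC A hA => exact isUnravelable_image_res_of_isOpen hA
  | empty => exact isUnravelable_image_res_of_isOpen isOpen_empty
  | compl A _ ih =>
    refine ih.compl.congr fun p hp ↦ ?_
    obtain ⟨x, rfl⟩ := isPlay_sequences_iff.1 hp
    exact (not_congr PiNat.res_injective.mem_set_image).trans
      (PiNat.res_injective.mem_set_image (s := Aᶜ)).symm
  | iUnion A _ ih =>
    exact (IsUnravelable.iUnion ih).congr fun p _ ↦ (Set.ext_iff.1 (Set.image_iUnion) p).symm

end GameForest

/-- In the sequence `x`, player `i` has chosen all of his terms (the even ones for `i = false`, the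
odd ones for `i = true`) by applying `σ` to the list `PiNat.res x n` of the preceding terms. -/
def FollowsStrategy {X : Type u} (i : Bool) (σ : List X → X) (x : ℕ → X) : Prop :=
  ∀ n, n.bodd = i → x n = σ (PiNat.res x n)

theorem borel_determinacy {X : Type u} [Nonempty X] [TopologicalSpace X] [DiscreteTopology X]
    {A : Set (ℕ → X)} (hA : MeasurableSet[borel (ℕ → X)] A) :
    (∃ σ, ∀ x, FollowsStrategy false σ x → x ∈ A) ∨
      ∃ σ, ∀ x, FollowsStrategy true σ x → x ∉ A := by
  obtain ⟨i, σ, hσ⟩ := (GameForest.isUnravelable_image_res hA).determined (fun _ ↦ rfl)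
    (r := []) rfl
  have hwin : ∃ τ, ∀ x, FollowsStrategy i τ x → (x ∈ A ↔ i = false) := by
    have hcons : ∀ p : List X, ∃ a, σ p = a :: p := fun p ↦ by
      obtain ⟨a, l, hal⟩ := List.exists_cons_of_length_eq_add_one (σ.level_next p)
      exact ⟨a, by rw [hal]; exact congrArg _ ((congrArg List.tail hal).symm.trans
        (σ.parent_next p))⟩
    choose τ hτ using hcons
    refine ⟨τ, fun x hx ↦ ?_⟩
    rw [← PiNat.res_injective.mem_set_image (s := A)]
    refine hσ _ (GameForest.isPlay_sequences_iff.2 ⟨x, rfl⟩) rfl fun n hn ↦ ?_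
    exact (congrArg (· :: PiNat.res x n) (hx n hn)).trans (hτ _).symm
  obtain ⟨τ, hτ⟩ := hwin
  cases i with
  | false => exact .inl ⟨τ, fun x hx ↦ (hτ x hx).2 rfl⟩
  | true => exact .inr ⟨τ, fun x hx hxA ↦ Bool.noConfusion ((hτ x hx).1 hxA)⟩

/-! ### Color strategies from strategies with memory -/

section LexicographicOrder

open Filter

variable {M : Type*} [LinearOrder M] [WellFoundedLT M]

lemma exists_lex_le_of_nonempty {S : Set (ℕ → M)} (hS : S.Nonempty) (n : ℕ) :
    ∃ r ∈ S, ∀ r' ∈ S, ∀ i ≤ n, (∀ j < i, r' j = r j) → r i ≤ r' i := by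
  let restrict (r : ℕ → M) : Lex (Fin (n + 1) → M) := toLex fun i ↦ r i
  obtain ⟨r, hrS, hr⟩ := (InvImage.wf restrict wellFounded_lt).has_min S hS
  refine ⟨r, hrS, fun r' hr'S i hi hri ↦ not_lt.1 fun hlt ↦ hr r' hr'S ?_⟩
  exact ⟨⟨i, Nat.lt_succ_of_le hi⟩, fun j hj ↦ hri j hj, hlt⟩

lemma exists_eventually_eq_of_lex_antitone {r : ℕ → ℕ → M}
    (hr : ∀ i, ∀ᶠ n in atTop, (∀ j < i, r (n + 1) j = r n j) → r (n + 1) i ≤ r n i) :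
    ∃ l : ℕ → M, ∀ i, ∀ᶠ n in atTop, r n i = l i := by
  refine Classical.skolem (p := fun i m ↦ ∀ᶠ n in atTop, r n i = m).1 fun i ↦ ?_
  induction i using Nat.strong_induction_on with
  | _ i ih =>
    have hstable : ∀ᶠ n in atTop, ∀ j < i, r (n + 1) j = r n j := by
      refine (Set.finite_lt_nat i).eventually_all.2 fun j hj ↦ ?_
      obtain ⟨m, hm⟩ := ih j hj
      filter_upwards [hm, (tendsto_add_atTop_nat 1).eventually hm] with n h h'
      exact h'.trans h.symm
    obtain ⟨N, hN⟩ := eventually_atTop.1 (hstable.and (hr i))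
    have hanti : AntitoneOn (r · i) (Set.Ici N) :=
      antitoneOn_nat_Ici_of_succ_le fun n hn ↦ (hN n hn).2 (hN n hn).1
    obtain ⟨_, ⟨k, hk, rfl⟩, hmin⟩ :=
      wellFounded_lt.has_min ((r · i) '' Set.Ici N) ⟨_, N, Set.self_mem_Ici, rfl⟩
    refine ⟨r k i, eventually_atTop.2 ⟨k, fun n hn ↦ ?_⟩⟩
    have hnN : n ∈ Set.Ici N := le_trans hk hn
    exact (hanti hk hnN hn).antisymm (not_lt.1 (hmin _ ⟨n, hnN, rfl⟩))

end LexicographicOrder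

lemma colorHist_eq_iff {Q K : Type u} {col : Q → Q → K} {π π' : ℕ → Q} {n : ℕ} :
    colorHist col π n = colorHist col π' n ↔ ∀ m < n, colorSeq col π m = colorSeq col π' m :=
  List.ofFn_inj.trans ⟨fun h m hm ↦ congrFun h ⟨m, hm⟩, fun h ↦ funext fun m ↦ h m m.2⟩

/-- A strategy with memory, in an arena on the states `Q` in which a player who chooses the action
`a` in the state `q` can be taken to any state in `Post q a`. In the memory state `m` the play has
reached `state m`, the player chooses `act m`, and some `m'` with `Succ m m'` comes next. -/
structure MemoryStrategy {Q Act : Type u} (Post : Q → Act → Set Q) where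
  Memory : Type u
  init : Memory
  state : Memory → Q
  act : Memory → Act
  Succ : Memory → Memory → Prop
  exists_succ : ∀ m, ∀ q ∈ Post (state m) (act m), ∃ m', Succ m m' ∧ state m' = q

namespace MemoryStrategy

variable {Q K Act : Type u} {Post : Q → Act → Set Q} (S : MemoryStrategy Post)

/-- `r` is an infinite sequence of successive memory states. -/
def IsRun (r : ℕ → S.Memory) : Prop :=
  r 0 = S.init ∧ ∀ n, S.Succ (r n) (r (n + 1))

/-- The sequences of memory states which up to time `n` are successive, have the color history `c`
and lead to the state `q`. Their terms after time `n` are arbitrary. -/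
def runsTo (col : Q → Q → K) (n : ℕ) (c : List K) (q : Q) : Set (ℕ → S.Memory) :=
  {r | r 0 = S.init ∧ (∀ m < n, S.Succ (r m) (r (m + 1))) ∧
    colorHist col (S.state ∘ r) n = c ∧ S.state (r n) = q}

variable {S} {col : Q → Q → K} {π : ℕ → Q}

lemma exists_mem_runsTo_succ {n : ℕ} {r : ℕ → S.Memory}
    (hr : r ∈ S.runsTo col n (colorHist col π n) (π n))
    (hπ : π (n + 1) ∈ Post (π n) (S.act (r n))) :
    ∃ r' ∈ S.runsTo col (n + 1) (colorHist col π (n + 1)) (π (n + 1)), ∀ i ≤ n, r' i = r i := by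
  obtain ⟨hinit, hsucc, hcol, hstate⟩ := hr
  obtain ⟨m, hm, hmπ⟩ := S.exists_succ (r n) _ (hstate ▸ hπ)
  have hne : ∀ i ≤ n, Function.update r (n + 1) m i = r i := fun i hi ↦
    Function.update_of_ne (by omega) _ _
  have hself : Function.update r (n + 1) m (n + 1) = m := Function.update_self _ _ _
  refine ⟨Function.update r (n + 1) m, ⟨?_, fun k hk ↦ ?_, ?_, ?_⟩, hne⟩
  · rw [hne 0 n.zero_le, hinit]
  · rcases (Nat.lt_succ_iff.1 hk).lt_or_eq with hkn | rfl
    · rw [hne k hkn.le, hne (k + 1) hkn]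
      exact hsucc k hkn
    · rwa [hne k le_rfl, hself]
  · refine colorHist_eq_iff.2 fun k hk ↦ ?_
    rcases (Nat.lt_succ_iff.1 hk).lt_or_eq with hkn | rfl
    · rw [← colorHist_eq_iff.1 hcol k hkn]
      simp only [colorSeq, Function.comp_apply, hne k hkn.le, hne (k + 1) hkn]
    · simp only [colorSeq, Function.comp_apply, hne k le_rfl, hself, hstate, hmπ]
  · rw [hself, hmπ]

lemma isRun_and_colorSeq_eq_of_eventually_eq {r : ℕ → ℕ → S.Memory} {l : ℕ → S.Memory}
    (hr : ∀ n, r n ∈ S.runsTo col n (colorHist col π n) (π n))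
    (hl : ∀ i, ∀ᶠ n in Filter.atTop, r n i = l i) :
    S.IsRun l ∧ colorSeq col (S.state ∘ l) = colorSeq col π := by
  have hrl : ∀ k, ∃ n > k, r n k = l k ∧ r n (k + 1) = l (k + 1) := fun k ↦
    ((Filter.eventually_gt_atTop k).and ((hl k).and (hl (k + 1)))).exists
  refine ⟨⟨?_, fun k ↦ ?_⟩, funext fun k ↦ ?_⟩
  · obtain ⟨n, -, h0, -⟩ := hrl 0
    rw [← h0, (hr n).1]
  · obtain ⟨n, hkn, hk, hk'⟩ := hrl k
    rw [← hk, ← hk']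
    exact (hr n).2.1 k hkn
  · obtain ⟨n, hkn, hk, hk'⟩ := hrl k
    rw [← colorHist_eq_iff.1 (hr n).2.2.1 k hkn]
    simp only [colorSeq, Function.comp_apply, hk, hk']

variable (S) in
/- At a color history `c` and a state `q` the color strategy acts as at the end of the
lexicographically least run with color history `c` that leads to `q`. Along a play these runs can
only decrease lexicographically, hence converge pointwise to a run with the colors of the play. -/
theorem exists_colorStrategy {D : Set (ℕ → K)}
    (hD : ∀ r, S.IsRun r → colorSeq col (S.state ∘ r) ∈ D) :
    ∃ s : List K → Q → Act, ∀ π : ℕ → Q, π 0 = S.state S.init →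
      (∀ n, π (n + 1) ∈ Post (π n) (s (colorHist col π n) (π n))) → colorSeq col π ∈ D := by
  obtain ⟨_, _⟩ := exists_wellFoundedLT S.Memory
  have hleast : ∀ n c q, ∃ r, (S.runsTo col n c q).Nonempty → r ∈ S.runsTo col n c q ∧
      ∀ r' ∈ S.runsTo col n c q, ∀ i ≤ n, (∀ j < i, r' j = r j) → r i ≤ r' i := fun n c q ↦ by
    rcases (S.runsTo col n c q).eq_empty_or_nonempty with h | h
    · exact ⟨fun _ ↦ S.init, fun h' ↦ absurd h h'.ne_empty⟩
    · exact (exists_lex_le_of_nonempty h n).imp fun _ hr _ ↦ hr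
  choose least hleast using hleast
  refine ⟨fun c q ↦ S.act (least c.length c q c.length), fun π hπ₀ hπ ↦ ?_⟩
  let r n := least n (colorHist col π n) (π n)
  have hπr : ∀ n, π (n + 1) ∈ Post (π n) (S.act (r n n)) := fun n ↦ by
    simpa only [r, colorHist, List.length_ofFn] using hπ n
  have hne : ∀ n, (S.runsTo col n (colorHist col π n) (π n)).Nonempty := fun n ↦ by
    induction n with
    | zero => exact ⟨fun _ ↦ S.init, rfl, fun m hm ↦ absurd hm m.not_lt_zero, rfl, hπ₀.symm⟩
    | succ n ih =>
      exact (exists_mem_runsTo_succ (hleast _ _ _ ih).1 (hπr n)).imp fun _ h ↦ h.1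
  have hr n : r n ∈ S.runsTo col n (colorHist col π n) (π n) := (hleast _ _ _ (hne n)).1
  obtain ⟨l, hl⟩ := exists_eventually_eq_of_lex_antitone (r := r) fun i ↦ by
    filter_upwards [Filter.eventually_ge_atTop i] with n hin hri
    obtain ⟨r', hr', hr'r⟩ := exists_mem_runsTo_succ (hr n) (hπr n)
    rw [← hr'r i hin]
    exact (hleast _ _ _ (hne (n + 1))).2 r' hr' i (by omega) fun j hj ↦
      (hr'r j (by omega)).trans (hri j hj).symm
  obtain ⟨hrun, hcol⟩ := isRun_and_colorSeq_eq_of_eventually_eq hr hl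
  exact hcol ▸ hD l hrun

end MemoryStrategy

/-! ### From concurrent games to games on sequences -/

section Sequentialization

variable {SA SB O Q K : Type u}

/-- The state reached from `q₀` after the moves of a list with the most recent move first, where the
moves are alternately played by A, who controls the first component, and B, who controls the
second one, and where a pending move of A has no effect yet. -/
def stateAfter (q₀ : Q) (δ : Q → SA → SB → Q) : List (SA × SB) → Q
  | [] => q₀
  | [_] => q₀
  | y :: x :: l => δ (stateAfter q₀ δ l) x.1 y.2

/-- The sequence of colors seen in the concurrent arena when the moves `x` are played in turn. -/
def colorsOfMoves (q₀ : Q) (δ : Q → SA → SB → Q) (col : Q → Q → K) (x : ℕ → SA × SB) : ℕ → K :=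
  colorSeq col fun n ↦ stateAfter q₀ δ (PiNat.res x (2 * n))

lemma isLocallyConstant_res {X : Type*} [TopologicalSpace X] [DiscreteTopology X] (n : ℕ) :
    IsLocallyConstant fun x : ℕ → X ↦ PiNat.res x n := by
  induction n with
  | zero => exact .const []
  | succ n ih =>
    exact ((IsLocallyConstant.iff_continuous _).2 (continuous_apply n)).comp₂ ih List.cons

lemma continuous_colorsOfMoves [TopologicalSpace (SA × SB)] [DiscreteTopology (SA × SB)]
    [TopologicalSpace K] (q₀ : Q) (δ : Q → SA → SB → Q) (col : Q → Q → K) :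
    Continuous (colorsOfMoves q₀ δ col) :=
  continuous_pi fun n ↦ (((isLocallyConstant_res (2 * n)).comp (stateAfter q₀ δ)).comp₂
    ((isLocallyConstant_res (2 * (n + 1))).comp (stateAfter q₀ δ)) col).continuous

lemma exists_res_two_mul_eq {X : Type*} {r : ℕ → List X} {a b : ℕ → X} (h₀ : r 0 = [])
    (hr : ∀ n, r (n + 1) = b n :: a n :: r n) :
    ∃ x : ℕ → X, ∀ n, PiNat.res x (2 * n) = r n ∧ x (2 * n) = a n ∧ x (2 * n + 1) = b n := by
  let x (n : ℕ) := bif n.bodd then b n.div2 else a n.div2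
  have heven n : x (2 * n) = a n := by simp [x, Nat.div2_val]
  have hodd n : x (2 * n + 1) = b n := by
    have hdiv : (2 * n + 1) / 2 = n := by omega
    simp [x, Nat.div2_val, hdiv]
  refine ⟨x, fun n ↦ ⟨?_, heven n, hodd n⟩⟩
  induction n with
  | zero => exact h₀.symm
  | succ n ih => rw [Nat.mul_succ, PiNat.res_succ, PiNat.res_succ, ih, heven, hodd, hr]

lemma exists_winA_of_followsStrategy {q₀ : Q} {δ : Q → SA → SB → Q} {col : Q → Q → K}
    {W : Set (ℕ → K)} {σ : List (SA × SB) → SA × SB}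
    (hσ : ∀ x, FollowsStrategy false σ x → colorsOfMoves q₀ δ col x ∈ W) :
    ∃ sA, WinA q₀ δ col W sA := by
  let S : MemoryStrategy fun q a ↦ {q' | ∃ b, q' = δ q a b} :=
    { Memory := List (SA × SB)
      init := []
      state := stateAfter q₀ δ
      act := fun l ↦ (σ l).1
      Succ := fun l l' ↦ ∃ y, l' = y :: σ l :: l
      exists_succ := by
        rintro l _ ⟨b, rfl⟩
        exact ⟨_, ⟨((σ l).1, b), rfl⟩, rfl⟩ }
  have hruns : ∀ r, S.IsRun r → colorSeq col (S.state ∘ r) ∈ W := by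
    rintro r ⟨h₀, hr⟩
    choose y hy using hr
    obtain ⟨x, hx⟩ := exists_res_two_mul_eq h₀ hy
    have hxr : colorsOfMoves q₀ δ col x = colorSeq col (S.state ∘ r) :=
      congrArg (colorSeq col) (funext fun n ↦ congrArg (stateAfter q₀ δ) (hx n).1)
    refine hxr ▸ hσ x fun n hn ↦ ?_
    obtain ⟨m, rfl | rfl⟩ := Nat.even_or_odd' n
    · rw [(hx m).1, (hx m).2.1]
    · simp at hn
  obtain ⟨s, hs⟩ := S.exists_colorStrategy hruns
  exact ⟨s, fun π hπ ↦ hs π hπ.1 hπ.2⟩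

lemma GFDetermined.exists_forall_exists_eq {ρ : SA → SB → O} (hρ : GFDetermined ρ) (f : SA → SB) :
    ∃ b, ∀ a, ∃ a', ρ a b = ρ a' (f a') := by
  rcases hρ {o | ¬∃ a', o = ρ a' (f a')} with ⟨a, ha⟩ | ⟨b, hb⟩
  · exact absurd ⟨a, rfl⟩ (ha (f a))
  · exact ⟨b, fun a ↦ not_not.1 (hb a)⟩

lemma exists_winB_of_followsStrategy [Nonempty SB] {ρ : SA → SB → O} (hρ : GFDetermined ρ)
    {q₀ : Q} {δ : Q → SA → SB → Q} (hδ : BuiltOn ρ δ) {col : Q → Q → K} {W : Set (ℕ → K)}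
    {τ : List (SA × SB) → SA × SB}
    (hτ : ∀ x, FollowsStrategy true τ x → colorsOfMoves q₀ δ col x ∉ W) :
    ∃ sB, WinB q₀ δ col W sB := by
  let move (a : SA) : SA × SB := (a, Classical.arbitrary SB)
  have hanswer : ∀ l, ∃ b, ∀ a, ∃ a',
      δ (stateAfter q₀ δ l) a b = δ (stateAfter q₀ δ l) a' (τ (move a' :: l)).2 := fun l ↦ by
    obtain ⟨h, hh⟩ := hδ (stateAfter q₀ δ l)
    simp only [hh]
    exact (hρ.exists_forall_exists_eq fun a ↦ (τ (move a :: l)).2).imp fun b hb a ↦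
      (hb a).imp fun _ ↦ congrArg h
  choose answer hanswer using hanswer
  let S : MemoryStrategy fun q b ↦ {q' | ∃ a, q' = δ q a b} :=
    { Memory := List (SA × SB)
      init := []
      state := stateAfter q₀ δ
      act := answer
      Succ := fun l l' ↦ ∃ x, l' = τ (x :: l) :: x :: l
      exists_succ := by
        rintro l _ ⟨a, rfl⟩
        obtain ⟨a', ha'⟩ := hanswer l a
        exact ⟨_, ⟨move a', rfl⟩, ha'.symm⟩ }
  have hruns : ∀ r, S.IsRun r → colorSeq col (S.state ∘ r) ∈ Wᶜ := by
    rintro r ⟨h₀, hr⟩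
    choose y hy using hr
    obtain ⟨x, hx⟩ := exists_res_two_mul_eq h₀ hy
    have hxr : colorsOfMoves q₀ δ col x = colorSeq col (S.state ∘ r) :=
      congrArg (colorSeq col) (funext fun n ↦ congrArg (stateAfter q₀ δ) (hx n).1)
    refine hxr ▸ hτ x fun n hn ↦ ?_
    obtain ⟨m, rfl | rfl⟩ := Nat.even_or_odd' n
    · simp at hn
    · rw [PiNat.res_succ, (hx m).1, (hx m).2.1, (hx m).2.2]
  obtain ⟨s, hs⟩ := S.exists_colorStrategy hruns
  exact ⟨s, fun π hπ ↦ hs π hπ.1 hπ.2⟩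

theorem GFDetermined.exists_winA_or_exists_winB [Nonempty SA] [Nonempty SB] {ρ : SA → SB → O}
    (hρ : GFDetermined ρ) (q₀ : Q) {δ : Q → SA → SB → Q} (hδ : BuiltOn ρ δ) (col : Q → Q → K)
    [TopologicalSpace K] {W : Set (ℕ → K)} (hW : MeasurableSet[borel (ℕ → K)] W) :
    (∃ sA, WinA q₀ δ col W sA) ∨ ∃ sB, WinB q₀ δ col W sB := by
  let _ : TopologicalSpace (SA × SB) := ⊥
  have _ : DiscreteTopology (SA × SB) := ⟨rfl⟩
  have hA : MeasurableSet[borel (ℕ → SA × SB)] (colorsOfMoves q₀ δ col ⁻¹' W) := by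
    borelize (ℕ → K) (ℕ → SA × SB)
    exact (continuous_colorsOfMoves q₀ δ col).measurable hW
  rcases borel_determinacy hA with ⟨σ, hσ⟩ | ⟨τ, hτ⟩
  · exact .inl (exists_winA_of_followsStrategy hσ)
  · exact .inr (exists_winB_of_followsStrategy hρ hδ hτ)

end Sequentialization

/-! ### Game forms from determined games -/

section Verdict

variable {SA SB O K : Type u} {ρ : SA → SB → O} {V : Set O} {β : Bool} {w w' : ℕ → K}

/-- The transition function of an arena which tests the outcome of its first interaction for
membership of `V`: in the state `(n, β)`, `n` interactions have taken place, and if `n ≠ 0` then `β`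
is the verdict. -/
noncomputable def verdictStep (ρ : SA → SB → O) (V : Set O) (q : ULift.{u} (ℕ × Bool)) (a : SA)
    (b : SB) : ULift.{u} (ℕ × Bool) :=
  ⟨(q.down.1 + 1, if q.down.1 = 0 then decide (ρ a b ∈ V) else q.down.2)⟩

/-- The coloring of the verdict arena under which a positive verdict produces the color sequence `w`
and a negative one produces `w'`. -/
def verdictColor (w w' : ℕ → K) (q q' : ULift.{u} (ℕ × Bool)) : K :=
  if q'.down.2 then w q.down.1 else w' q.down.1

/-- The play of the verdict arena with verdict `β`. -/
def verdictPlay (β : Bool) (n : ℕ) : ULift.{u} (ℕ × Bool) := ⟨(n, decide (n ≠ 0) && β)⟩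

lemma builtOn_verdictStep (ρ : SA → SB → O) (V : Set O) : BuiltOn ρ (verdictStep ρ V) := fun q ↦
  ⟨fun o ↦ ⟨(q.down.1 + 1, if q.down.1 = 0 then decide (o ∈ V) else q.down.2)⟩, fun _ _ ↦ rfl⟩

lemma verdictPlay_succ {n : ℕ} {a : SA} {b : SB} (hβ : n = 0 → β = decide (ρ a b ∈ V)) :
    verdictPlay β (n + 1) = verdictStep ρ V (verdictPlay β n) a b := by
  rcases n with - | n
  · simp [verdictStep, verdictPlay, hβ]
  · simp [verdictStep, verdictPlay]

lemma colorSeq_verdictPlay :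
    colorSeq (verdictColor w w') (verdictPlay β) = if β then w else w' := by
  funext n
  cases β <;> simp [colorSeq, verdictColor, verdictPlay]

theorem GFDetermined.of_forall_builtOn {W : Set (ℕ → K)} (hW : W.Nonempty) (hW' : Wᶜ.Nonempty)
    (h : ∀ (Q : Type u) (_ : Nonempty Q) (q₀ : Q) (δ : Q → SA → SB → Q) (col : Q → Q → K),
      BuiltOn ρ δ → (∃ sA, WinA q₀ δ col W sA) ∨ ∃ sB, WinB q₀ δ col W sB) :
    GFDetermined ρ := by
  intro V
  obtain ⟨w, hw⟩ := hW
  obtain ⟨w', hw'⟩ := hW'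
  rcases h _ ⟨verdictPlay false 0⟩ (verdictPlay false 0) _ (verdictColor w w')
    (builtOn_verdictStep ρ V) with ⟨s, hs⟩ | ⟨s, hs⟩
  · refine .inl ⟨s [] (verdictPlay false 0), fun b ↦ ?_⟩
    by_contra hb
    have hplay := hs (verdictPlay false) ⟨rfl, fun n ↦ ⟨b, verdictPlay_succ fun hn ↦ ?_⟩⟩
    · rw [colorSeq_verdictPlay] at hplay
      exact hw' hplay
    · subst hn
      exact (decide_eq_false hb).symm
  · refine .inr ⟨s [] (verdictPlay false 0), fun a ha ↦ ?_⟩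
    have hplay := hs (verdictPlay true) ⟨rfl, fun n ↦ ⟨a, verdictPlay_succ fun hn ↦ ?_⟩⟩
    · rw [colorSeq_verdictPlay] at hplay
      exact hplay hw
    · subst hn
      exact (decide_eq_true ha).symm

end Verdict

lemma mem_cyl_singleton {K : Type u} {k : K} {x : ℕ → K} : x ∈ Cyl [k] ↔ x 0 = k := by
  simp [Cyl]

lemma borelSeq_le_borel {K : Type u} [TopologicalSpace K] [DiscreteTopology K] :
    BorelSeq K ≤ borel (ℕ → K) := by
  refine MeasurableSpace.generateFrom_le ?_
  rintro _ ⟨l, rfl⟩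
  refine MeasurableSpace.measurableSet_generateFrom ?_
  have hcyl : Cyl l = ⋂ i : Fin l.length, {x | x i = l.get i} := by
    ext x
    simp only [Cyl, Set.mem_iInter, Set.mem_ofPred_eq]
    exact ⟨fun h i ↦ h i i.2, fun h i hi ↦ h ⟨i, hi⟩⟩
  rw [hcyl]
  exact isOpen_iInter_of_finite fun i ↦ (isOpen_discrete {l.get i}).preimage
    (continuous_apply (A := fun _ ↦ K) (i : ℕ))

theorem stmt3_general {SA SB O K : Type u} [Nonempty SA] [Nonempty SB] [TopologicalSpace K]
    (𝓑 : MeasurableSpace (ℕ → K)) (h𝓑 : 𝓑 ≤ borel (ℕ → K)) (h𝓑' : BorelSeq K ≤ 𝓑)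
    (hK : ∃ k k' : K, k ≠ k') (ρ : SA → SB → O) :
    (GFDetermined ρ ↔
      (∀ W : Set (ℕ → K), MeasurableSet[𝓑] W →
        ∀ (Q : Type u) (_ : Nonempty Q) (q0 : Q) (δ : Q → SA → SB → Q)
          (col : Q → Q → K), BuiltOn ρ δ →
          ((∃ sA : List K → Q → SA, WinA q0 δ col W sA) ∨
           (∃ sB : List K → Q → SB, WinB q0 δ col W sB)))) ∧
    (GFDetermined ρ ↔
      (∃ W : Set (ℕ → K), MeasurableSet[𝓑] W ∧ W.Nonempty ∧ Wᶜ.Nonempty ∧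
        ∀ (Q : Type u) (_ : Nonempty Q) (q0 : Q) (δ : Q → SA → SB → Q)
          (col : Q → Q → K), BuiltOn ρ δ →
          ((∃ sA : List K → Q → SA, WinA q0 δ col W sA) ∨
           (∃ sB : List K → Q → SB, WinB q0 δ col W sB)))) := by
  obtain ⟨k, k', hk⟩ := hK
  have hmeas : MeasurableSet[𝓑] (Cyl [k]) :=
    h𝓑' _ (MeasurableSpace.measurableSet_generateFrom ⟨[k], rfl⟩)
  have hne : (Cyl [k]).Nonempty := ⟨fun _ ↦ k, mem_cyl_singleton.2 rfl⟩
  have hne' : (Cyl [k])ᶜ.Nonempty := ⟨fun _ ↦ k', fun h ↦ hk (mem_cyl_singleton.1 h).symm⟩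
  refine ⟨⟨fun hρ W hW Q _ q₀ δ col hδ ↦ hρ.exists_winA_or_exists_winB q₀ hδ col (h𝓑 W hW),
    fun h ↦ .of_forall_builtOn hne hne' (h _ hmeas)⟩, fun hρ ↦ ⟨Cyl [k], hmeas, hne, hne',
    fun Q _ q₀ δ col hδ ↦ hρ.exists_winA_or_exists_winB q₀ hδ col (h𝓑 _ hmeas)⟩, ?_⟩
  rintro ⟨W, -, hW, hW', h⟩
  exact .of_forall_builtOn hW hW' h

/-- For a game form `F = ⟨S_A, S_B, O, ρ⟩` and a set of colors `K` with at least two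
elements, the following are equivalent: (1) `F` is determined; (2) for every Borel
`W ⊆ K^ω`, every game on an arena built on `F` is determined; (3) there exists a
non-trivial Borel `W` such that every game on an arena built on `F` is determined. -/
theorem stmt3 {SA SB O K : Type u} [Nonempty SA] [Nonempty SB] [Nonempty O]
    [Nonempty K] (hK : ∃ k k' : K, k ≠ k') (ρ : SA → SB → O) :
    (GFDetermined ρ ↔
      (∀ W : Set (ℕ → K), MeasurableSet[BorelSeq K] W →
        ∀ (Q : Type u) (_ : Nonempty Q) (q0 : Q) (δ : Q → SA → SB → Q)
          (col : Q → Q → K), BuiltOn ρ δ →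
          ((∃ sA : List K → Q → SA, WinA q0 δ col W sA) ∨
           (∃ sB : List K → Q → SB, WinB q0 δ col W sB)))) ∧
    (GFDetermined ρ ↔
      (∃ W : Set (ℕ → K), MeasurableSet[BorelSeq K] W ∧ W.Nonempty ∧ Wᶜ.Nonempty ∧
        ∀ (Q : Type u) (_ : Nonempty Q) (q0 : Q) (δ : Q → SA → SB → Q)
          (col : Q → Q → K), BuiltOn ρ δ →
          ((∃ sA : List K → Q → SA, WinA q0 δ col W sA) ∨
           (∃ sB : List K → Q → SB, WinB q0 δ col W sB)))) := by
  let _ : TopologicalSpace K := ⊥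
  have _ : DiscreteTopology K := ⟨rfl⟩
  exact stmt3_general (BorelSeq K) borelSeq_le_borel le_rfl hK ρ
end

section
/- Let K be a non-empty set, W ⊆ K^ω, and M = ⟨M, m_init, μ⟩ a memory skeleton on K. Then W is M-monotone and M-selective if and only if Seq(W) is Seq(M)-monotone and Seq(M)-selective (as an objective over the alphabet Option K). -/
universe u

/-- The length-`n` prefix of an infinite sequence, as a finite word. -/
def prefixWord {D : Type u} (ρ : ℕ → D) (n : ℕ) : List D :=
  List.ofFn (fun i : Fin n => ρ i)

/-- A finite word is a prefix of an infinite sequence. -/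
def IsPrefixOfSeq {K : Type u} (w : List K) (ρ : ℕ → K) : Prop :=
  ∀ i : ℕ, ∀ h : i < w.length, w.get ⟨i, h⟩ = ρ i

/-- `ρ ∈ K^ω` is the projection of `ρ' ∈ (Option K)^ω`: every erased prefix of `ρ'`
is a prefix of `ρ` and the lengths of the erased prefixes tend to infinity
(equivalently, `ρ'` has infinitely many `some` entries whose values, in order,
form `ρ`). -/
def IsProjOf {K : Type u} (ρ : ℕ → K) (ρ' : ℕ → Option K) : Prop :=
  (∀ n : ℕ, IsPrefixOfSeq ((prefixWord ρ' n).reduceOption) ρ) ∧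
  Filter.Tendsto (fun n => ((prefixWord ρ' n).reduceOption).length)
    Filter.atTop Filter.atTop

/-- The sequential version `Seq(W)` of an objective `W ⊆ K^ω`: the sequences in
`(Option K)^ω` with infinitely many `some` entries whose subsequence of values
lies in `W`. -/
def SeqObj {K : Type u} (W : Set (ℕ → K)) : Set (ℕ → Option K) :=
  {ρ' | ∃ ρ ∈ W, IsProjOf ρ ρ'}

/-- `L` is a regular language over `K`: it uses only finitely many letters and it is
accepted by a deterministic finite automaton with finitely many states. -/
def RegularLang {K : Type u} (L : Set (List K)) : Prop :=
  ∃ Sig : Finset K, (∀ w ∈ L, ∀ a ∈ w, a ∈ Sig) ∧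
    ∃ (σ : Type u) (_ : Fintype σ) (M : DFA K σ), ∀ w : List K, w ∈ M.accepts ↔ w ∈ L

/-- `[L]`: the infinite sequences all of whose finite prefixes are prefixes of
words of `L`. -/
def LimitLang {K : Type u} (L : Set (List K)) : Set (ℕ → K) :=
  {ρ | ∀ n : ℕ, ∃ w ∈ L, prefixWord ρ n <+: w}

/-- `ρ ≺_W ρ'` iff `ρ ∉ W` and `ρ' ∈ W`. -/
def PrefLt {K : Type u} (W : Set (ℕ → K)) (ρ ρ' : ℕ → K) : Prop := ρ ∉ W ∧ ρ' ∈ W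

/-- `ρ ⪯_W ρ'` iff `¬(ρ' ≺_W ρ)`. -/
def PrefLe {K : Type u} (W : Set (ℕ → K)) (ρ ρ' : ℕ → K) : Prop := ¬ PrefLt W ρ' ρ

/-- `N ⪯_W N'` iff every element of `N` is `⪯_W` some element of `N'`. -/
def SetLe {K : Type u} (W : Set (ℕ → K)) (N N' : Set (ℕ → K)) : Prop :=
  ∀ ρ ∈ N, ∃ ρ' ∈ N', PrefLe W ρ ρ'

/-- `N ≺_W N'` iff some element of `N'` is `≻_W` every element of `N`. -/
def SetLt {K : Type u} (W : Set (ℕ → K)) (N N' : Set (ℕ → K)) : Prop :=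
  ∃ ρ' ∈ N', ∀ ρ ∈ N, PrefLt W ρ ρ'

/-- Left-fold iteration of an update function along a finite word. -/
def iterUpd {M K : Type u} (μ : M → K → M) (m : M) (ρ : List K) : M := ρ.foldl μ m

/-- `L^M_{m,m'}`: the words driving the memory from `m` to `m'`. -/
def MemLang {M K : Type u} (μ : M → K → M) (m m' : M) : Set (List K) :=
  {ρ | iterUpd μ m ρ = m'}

/-- The language `ρ · L`. -/
def consLang {K : Type u} (ρ : List K) (L : Set (List K)) : Set (List K) :=
  {w | ∃ v ∈ L, w = ρ ++ v}

/-- Concatenation of languages. -/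
def catLang {K : Type u} (L L' : Set (List K)) : Set (List K) :=
  {w | ∃ u ∈ L, ∃ v ∈ L', w = u ++ v}

/-- Kleene star of a language. -/
def kstarLang {K : Type u} (L : Set (List K)) : Set (List K) :=
  {w | ∃ ls : List (List K), (∀ u ∈ ls, u ∈ L) ∧ w = ls.flatten}

/-- `W` is `M`-monotone for the memory skeleton `⟨M, minit, μ⟩`. -/
def MMonotone {M K : Type u} (μ : M → K → M) (minit : M) (W : Set (ℕ → K)) : Prop :=
  ∀ m : M, ∀ L1 L2 : Set (List K), RegularLang L1 → RegularLang L2 →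
    (∃ ρ ∈ MemLang μ minit m,
        SetLt W (LimitLang (consLang ρ L1)) (LimitLang (consLang ρ L2))) →
    ∀ ρ' ∈ MemLang μ minit m,
        SetLe W (LimitLang (consLang ρ' L1)) (LimitLang (consLang ρ' L2))

/-- `W` is `M`-selective for the memory skeleton `⟨M, minit, μ⟩`. -/
def MSelective {M K : Type u} (μ : M → K → M) (minit : M) (W : Set (ℕ → K)) : Prop :=
  ∀ ρ : List K, ∀ L1 L2 L3 : Set (List K),
    RegularLang L1 → RegularLang L2 → RegularLang L3 →
    L1 ⊆ MemLang μ (iterUpd μ minit ρ) (iterUpd μ minit ρ) →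
    L2 ⊆ MemLang μ (iterUpd μ minit ρ) (iterUpd μ minit ρ) →
    SetLe W (LimitLang (consLang ρ (catLang (kstarLang (L1 ∪ L2)) L3)))
      (LimitLang (consLang ρ (kstarLang L1)) ∪ LimitLang (consLang ρ (kstarLang L2)) ∪
        LimitLang (consLang ρ L3))

/-- The sequential version of an update function: `none` leaves the memory
unchanged, `some k` updates by `k`. -/
def seqUpd {M K : Type u} (μ : M → K → M) : M → Option K → M :=
  fun m o => match o with
    | none => m
    | some k => μ m k

/-!
Erasing the `none` entries maps regular languages over `Option K` to regular languages over `K` and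
commutes with concatenation and Kleene star. For a regular language `L` over `Option K` it also
commutes with `[·]`: a sequence `τ` all of whose prefixes extend to erased words of `L` is itself
the erasure of a sequence in `[L]`. This is König's lemma: although infinitely many words may erase
to a given prefix of `τ`, only the finitely many left quotients of `L` matter. Hence `Seq(W)` meets
`[L]` iff `W` meets the limit of the erased language. Whether `N ⪯_W N'` or `N ≺_W N'` holds depends
only on whether `N`, `N'` and their intersections with `W` and its complement are non-empty, and the
cases in which `W` plays no part do not depend on the prefix `ρ`. In the other direction, `K^ω`
embeds in `(Option K)^ω` by `k ↦ some k`.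
-/

section Prefixes

variable {A : Type u}

@[simp]
theorem length_prefixWord (σ : ℕ → A) (n : ℕ) : (prefixWord σ n).length = n :=
  List.length_ofFn

@[simp]
theorem getElem_prefixWord (σ : ℕ → A) {n i : ℕ} (hi : i < (prefixWord σ n).length) :
    (prefixWord σ n)[i] = σ i :=
  List.getElem_ofFn hi

theorem prefixWord_some_comp (τ : ℕ → A) (n : ℕ) :
    prefixWord (some ∘ τ) n = (prefixWord τ n).map some :=
  List.map_ofFn.symm

theorem drop_prefixWord_add (σ : ℕ → A) (m n : ℕ) :
    (prefixWord σ (m + n)).drop m = prefixWord (fun i => σ (m + i)) n :=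
  List.ext_getElem (by simp) (by simp)

theorem prefixWord_isPrefix_prefixWord (σ : ℕ → A) {m n : ℕ} (hmn : m ≤ n) :
    prefixWord σ m <+: prefixWord σ n :=
  List.prefix_iff_getElem.2 ⟨by simpa using hmn, by simp⟩

theorem isPrefixOfSeq_of_isPrefix_prefixWord {w : List A} {σ : ℕ → A} {n : ℕ}
    (h : w <+: prefixWord σ n) : IsPrefixOfSeq w σ :=
  fun i hi => by simpa using h.getElem hi

namespace IsPrefixOfSeq

variable {w : List A} {σ : ℕ → A}

theorem prefixWord_length (h : IsPrefixOfSeq w σ) : prefixWord σ w.length = w :=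
  List.ext_getElem (by simp) fun i _ hi => by simpa using (h i hi).symm

theorem isPrefix_prefixWord (h : IsPrefixOfSeq w σ) {n : ℕ} (hn : w.length ≤ n) :
    w <+: prefixWord σ n :=
  h.prefixWord_length ▸ prefixWord_isPrefix_prefixWord σ hn

theorem prefixWord_isPrefix (h : IsPrefixOfSeq w σ) {n : ℕ} (hn : n ≤ w.length) :
    prefixWord σ n <+: w :=
  h.prefixWord_length ▸ prefixWord_isPrefix_prefixWord σ hn

end IsPrefixOfSeq

end Prefixes

section Limits

variable {A : Type u} {L L₁ L₂ L₃ : Set (List A)}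

theorem exists_mem_limitLang_of_chain {c : ℕ → List A} (hc : ∀ n, c n <+: c (n + 1))
    (hlen : ∀ n, n ≤ (c n).length) (hL : ∀ n, ∃ w ∈ L, c n <+: w) :
    ∃ σ ∈ LimitLang L, ∀ n, IsPrefixOfSeq (c n) σ := by
  have hmono {m n : ℕ} (hmn : m ≤ n) : c m <+: c n :=
    Nat.rel_of_forall_rel_succ_of_le (· <+: ·) hc hmn
  let σ : ℕ → A := fun i => (c (i + 1))[i]'(hlen (i + 1))
  have hσ (n : ℕ) : IsPrefixOfSeq (c n) σ := fun i hi => by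
    rcases le_total n (i + 1) with hn | hn
    · exact (hmono hn).getElem hi
    · exact ((hmono hn).getElem (hlen (i + 1))).symm
  refine ⟨σ, fun n => ?_, hσ⟩
  obtain ⟨w, hw, hcw⟩ := hL n
  exact ⟨w, hw, ((hσ n).prefixWord_isPrefix (hlen n)).trans hcw⟩

theorem limitLang_consLang_nonempty_iff (ρ : List A) :
    (LimitLang (consLang ρ L)).Nonempty ↔ (LimitLang L).Nonempty := by
  constructor
  · rintro ⟨σ, hσ⟩
    refine ⟨fun i => σ (ρ.length + i), fun n => ?_⟩
    obtain ⟨_, ⟨v, hv, rfl⟩, hp⟩ := hσ (ρ.length + n)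
    refine ⟨v, hv, ?_⟩
    simpa only [drop_prefixWord_add, List.drop_left] using hp.drop ρ.length
  · rintro ⟨σ, hσ⟩
    obtain ⟨σ', hσ', -⟩ := exists_mem_limitLang_of_chain (L := consLang ρ L)
      (c := fun n => ρ ++ prefixWord σ n)
      (fun n => (List.prefix_append_right_inj ρ).2 (prefixWord_isPrefix_prefixWord σ n.le_succ))
      (fun n => by simp)
      (fun n => by
        obtain ⟨w, hw, hp⟩ := hσ n
        exact ⟨ρ ++ w, ⟨w, hw, rfl⟩, (List.prefix_append_right_inj ρ).2 hp⟩)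
    exact ⟨σ', hσ'⟩

theorem limitLang_kstarLang_nonempty {w : List A} (hw : w ∈ L) (hne : w ≠ []) :
    (LimitLang (kstarLang L)).Nonempty := by
  obtain ⟨σ, hσ, -⟩ := exists_mem_limitLang_of_chain (L := kstarLang L)
    (c := fun n => (List.replicate n w).flatten)
    (fun n => by
      rw [List.replicate_succ', List.flatten_append]
      exact List.prefix_append _ _)
    (fun n => by
      simpa using Nat.le_mul_of_pos_right n (List.length_pos_iff.2 hne))
    (fun n => ⟨_, ⟨List.replicate n w, fun u hu => List.eq_of_mem_replicate hu ▸ hw, rfl⟩,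
      List.prefix_rfl⟩)
  exact ⟨σ, hσ⟩

theorem catLang_kstarLang_subset (hL : ∀ w ∈ L, w = []) : catLang (kstarLang L) L₃ ⊆ L₃ := by
  rintro _ ⟨_, ⟨ls, hls, rfl⟩, v, hv, rfl⟩
  have hnil : ls.flatten = [] := List.flatten_eq_nil_iff.2 fun u hu => hL u (hls u hu)
  simpa only [hnil, List.nil_append] using hv

theorem limitLang_mono (h : L₁ ⊆ L₂) : LimitLang L₁ ⊆ LimitLang L₂ := fun _ hσ n =>
  (hσ n).imp fun _ hw => ⟨h hw.1, hw.2⟩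

theorem limitLang_nonempty_of_catLang_kstarLang_union
    (h : (LimitLang (catLang (kstarLang (L₁ ∪ L₂)) L₃)).Nonempty) :
    (LimitLang (kstarLang L₁)).Nonempty ∨ (LimitLang (kstarLang L₂)).Nonempty ∨
      (LimitLang L₃).Nonempty := by
  by_cases hnil : ∀ w ∈ L₁ ∪ L₂, w = []
  · exact .inr (.inr (h.mono (limitLang_mono (catLang_kstarLang_subset hnil))))
  · push Not at hnil
    obtain ⟨w, hw | hw, hne⟩ := hnil
    · exact .inl (limitLang_kstarLang_nonempty hw hne)
    · exact .inr (.inl (limitLang_kstarLang_nonempty hw hne))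

end Limits

section Kstar

variable {A : Type u} {L : Set (List A)}

theorem append_mem_kstarLang {u v : List A} (hu : u ∈ kstarLang L) (hv : v ∈ kstarLang L) :
    u ++ v ∈ kstarLang L := by
  obtain ⟨us, hus, rfl⟩ := hu
  obtain ⟨vs, hvs, rfl⟩ := hv
  exact ⟨us ++ vs, List.forall_mem_append.2 ⟨hus, hvs⟩, List.flatten_append.symm⟩

theorem subset_kstarLang : L ⊆ kstarLang L := fun w hw => ⟨[w], by simpa using hw, by simp⟩

theorem append_mem_kstarLang_iff {u v : List A} :
    u ++ v ∈ kstarLang L ↔ (u ∈ kstarLang L ∧ v ∈ kstarLang L) ∨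
      ∃ u₁ ∈ kstarLang L, ∃ u₂ v₁, ∃ v₂ ∈ kstarLang L,
        u = u₁ ++ u₂ ∧ v = v₁ ++ v₂ ∧ u₂ ++ v₁ ∈ L := by
  constructor
  · rintro ⟨ls, hls, huv⟩
    rcases List.flatten_eq_append_iff.1 huv.symm with
      ⟨us, vs, rfl, rfl, rfl⟩ | ⟨us, u₂, a, v₁, vs, rfl, rfl, rfl⟩
    · obtain ⟨hus, hvs⟩ := List.forall_mem_append.1 hls
      exact .inl ⟨⟨us, hus, rfl⟩, ⟨vs, hvs, rfl⟩⟩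
    · obtain ⟨hus, hvs⟩ := List.forall_mem_append.1 hls
      obtain ⟨hmid, hvs⟩ := List.forall_mem_cons.1 hvs
      exact .inr ⟨_, ⟨us, hus, rfl⟩, u₂, a :: v₁, _, ⟨vs, hvs, rfl⟩, rfl, rfl, hmid⟩
  · rintro (⟨hu, hv⟩ | ⟨u₁, hu₁, u₂, v₁, v₂, hv₂, rfl, rfl, hmid⟩)
    · exact append_mem_kstarLang hu hv
    · have := append_mem_kstarLang hu₁ (append_mem_kstarLang (subset_kstarLang hmid) hv₂)
      simpa only [List.append_assoc] using this

end Kstar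

section Regular

variable {A B : Type u} {L : Set (List A)}

/-- The left quotient of `L` by the word `u`. It is Mathlib's `Language.leftQuotient`, restated for
the bare sets of words that represent languages here. -/
def leftQuot (L : Set (List A)) (u : List A) : Set (List A) :=
  {v | u ++ v ∈ L}

/-- A language with finitely many left quotients. By the Myhill–Nerode theorem this is what
`RegularLang` demands besides the finiteness of the alphabet. -/
def HasFiniteQuotients (L : Set (List A)) : Prop :=
  (Set.range (leftQuot L)).Finite

theorem regularLang_iff :
    RegularLang L ↔ (∃ S : Finset A, ∀ w ∈ L, ∀ a ∈ w, a ∈ S) ∧ HasFiniteQuotients L := by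
  have hdfa : (∃ (σ : Type u) (_ : Fintype σ) (M : DFA A σ), ∀ w, w ∈ M.accepts ↔ w ∈ L) ↔
      HasFiniteQuotients L :=
    (exists₃_congr fun _ _ _ => Set.ext_iff.symm).trans <|
      (Language.isRegular_iff (L := L)).symm.trans
        Language.isRegular_iff_finite_range_leftQuotient
  rw [RegularLang, hdfa, exists_and_right]

protected theorem HasFiniteQuotients.consLang (hL : HasFiniteQuotients L) (ρ : List A) :
    HasFiniteQuotients (consLang ρ L) := by
  have hsuffixes : {t | t <:+ ρ}.Finite := ρ.tails.finite_toSet.subset fun t ht => by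
    simpa using ht
  refine ((hsuffixes.image fun t => consLang t L).union (hL.insert ∅)).subset ?_
  rintro _ ⟨u, rfl⟩
  by_cases hu : u <+: ρ
  · obtain ⟨t, rfl⟩ := hu
    refine .inl ⟨t, List.suffix_append u t, ?_⟩
    simp [leftQuot, consLang]
  by_cases hρ : ρ <+: u
  · obtain ⟨t, rfl⟩ := hρ
    refine .inr (.inr ⟨t, ?_⟩)
    simp [leftQuot, consLang]
  · refine .inr (.inl (Set.eq_empty_of_forall_notMem ?_))
    rintro v ⟨w, -, huv⟩
    exact (List.prefix_or_prefix_of_prefix ⟨v, rfl⟩ ⟨w, huv.symm⟩).elim hu hρ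

protected theorem HasFiniteQuotients.kstarLang (hL : HasFiniteQuotients L) :
    HasFiniteQuotients (kstarLang L) := by
  -- The quotient by `u` depends only on whether `u ∈ L*` and on which quotients of `L` arise from
  -- the suffixes `u₂` of `u` that remain after removing a prefix in `L*`.
  let quotOf : Prop → Set (Set (List A)) → Set (List A) := fun p 𝒬 =>
    {v | p ∧ v ∈ kstarLang L} ∪ catLang (⋃₀ 𝒬) (kstarLang L)
  refine (Set.Finite.image2 quotOf Set.finite_univ hL.finite_subsets).subset ?_
  rintro _ ⟨u, rfl⟩
  refine ⟨u ∈ kstarLang L, Set.mem_univ _,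
    leftQuot L '' {u₂ | ∃ u₁ ∈ kstarLang L, u = u₁ ++ u₂}, Set.image_subset_range _ _, ?_⟩
  ext v
  constructor
  · rintro (⟨hu, hv⟩ | ⟨v₁, ⟨_, ⟨u₂, ⟨u₁, hu₁, rfl⟩, rfl⟩, hmid⟩, v₂, hv₂, rfl⟩)
    · exact append_mem_kstarLang_iff.2 (.inl ⟨hu, hv⟩)
    · exact append_mem_kstarLang_iff.2 (.inr ⟨u₁, hu₁, u₂, v₁, v₂, hv₂, rfl, rfl, hmid⟩)
  · intro huv
    rcases append_mem_kstarLang_iff.1 huv with h | ⟨u₁, hu₁, u₂, v₁, v₂, hv₂, rfl, rfl, hmid⟩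
    · exact .inl h
    · exact .inr ⟨v₁, ⟨_, ⟨u₂, ⟨u₁, hu₁, rfl⟩, rfl⟩, hmid⟩, v₂, hv₂, rfl⟩

theorem HasFiniteQuotients.image_filterMap (hL : HasFiniteQuotients L) (f : A → Option B) :
    HasFiniteQuotients (List.filterMap f '' L) := by
  refine (hL.finite_subsets.image fun 𝒬 => List.filterMap f '' ⋃₀ 𝒬).subset ?_
  rintro _ ⟨u, rfl⟩
  refine ⟨leftQuot L '' {w | w.filterMap f = u}, Set.image_subset_range _ _, ?_⟩
  ext v
  constructor
  · rintro ⟨w₂, ⟨_, ⟨w₁, rfl, rfl⟩, hw⟩, rfl⟩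
    exact ⟨w₁ ++ w₂, hw, List.filterMap_append⟩
  · rintro ⟨w, hw, hwuv⟩
    obtain ⟨w₁, w₂, rfl, rfl, rfl⟩ := List.filterMap_eq_append_iff.1 hwuv
    exact ⟨w₂, ⟨_, ⟨w₁, rfl, rfl⟩, hw⟩, rfl⟩

theorem RegularLang.image_filterMap (hL : RegularLang L) (f : A → Option B) :
    RegularLang (List.filterMap f '' L) := by
  classical
  obtain ⟨⟨S, hS⟩, hquot⟩ := regularLang_iff.1 hL
  refine regularLang_iff.2 ⟨⟨(S.image f).eraseNone, ?_⟩, hquot.image_filterMap f⟩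
  rintro _ ⟨w, hw, rfl⟩ b hb
  obtain ⟨a, ha, hab⟩ := List.mem_filterMap.1 hb
  exact Finset.mem_eraseNone.2 (Finset.mem_image.2 ⟨a, hS w hw a ha, hab⟩)

theorem RegularLang.image_reduceOption {L : Set (List (Option A))} (hL : RegularLang L) :
    RegularLang (List.reduceOption '' L) :=
  hL.image_filterMap id

theorem RegularLang.image_map_some (hL : RegularLang L) : RegularLang (List.map some '' L) := by
  simpa only [List.filterMap_eq_map'] using hL.image_filterMap fun a => some (some a)

end Regular

section Image

variable {A B : Type u} {g : List A → List B}

theorem image_consLang (hg : ∀ u v, g (u ++ v) = g u ++ g v) (ρ : List A) (L : Set (List A)) :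
    g '' consLang ρ L = consLang (g ρ) (g '' L) := by
  ext w
  constructor
  · rintro ⟨_, ⟨v, hv, rfl⟩, rfl⟩
    exact ⟨g v, ⟨v, hv, rfl⟩, hg ρ v⟩
  · rintro ⟨_, ⟨v, hv, rfl⟩, rfl⟩
    exact ⟨ρ ++ v, ⟨v, hv, rfl⟩, hg ρ v⟩

theorem image_catLang (hg : ∀ u v, g (u ++ v) = g u ++ g v) (L L' : Set (List A)) :
    g '' catLang L L' = catLang (g '' L) (g '' L') := by
  ext w
  constructor
  · rintro ⟨_, ⟨u, hu, v, hv, rfl⟩, rfl⟩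
    exact ⟨g u, ⟨u, hu, rfl⟩, g v, ⟨v, hv, rfl⟩, hg u v⟩
  · rintro ⟨_, ⟨u, hu, rfl⟩, _, ⟨v, hv, rfl⟩, rfl⟩
    exact ⟨u ++ v, ⟨u, hu, v, hv, rfl⟩, hg u v⟩

theorem apply_flatten (hg : ∀ u v, g (u ++ v) = g u ++ g v) (ls : List (List A)) :
    g ls.flatten = (ls.map g).flatten := by
  induction ls with
  | nil => exact List.self_eq_append_right.1 (hg [] [])
  | cons u ls ih => rw [List.flatten_cons, hg, ih, List.map_cons, List.flatten_cons]

theorem image_kstarLang (hg : ∀ u v, g (u ++ v) = g u ++ g v) (L : Set (List A)) :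
    g '' kstarLang L = kstarLang (g '' L) := by
  ext w
  constructor
  · rintro ⟨_, ⟨ls, hls, rfl⟩, rfl⟩
    exact ⟨ls.map g, List.forall_mem_map.2 fun u hu => ⟨u, hls u hu, rfl⟩, apply_flatten hg ls⟩
  · rintro ⟨ls, hls, rfl⟩
    choose! f hf hgf using hls
    refine ⟨_, ⟨ls.map f, List.forall_mem_map.2 hf, rfl⟩, ?_⟩
    rw [apply_flatten hg, List.map_map]
    exact congrArg List.flatten ((List.map_congr_left hgf).trans (List.map_id' ls))

end Image

section Projection

variable {K : Type u} {L : Set (List (Option K))} {τ : ℕ → K} {σ : ℕ → Option K}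

theorem reduceOption_map_some (w : List K) : (w.map some).reduceOption = w := by
  simp [List.reduceOption]

theorem isProjOf_some_comp (τ : ℕ → K) : IsProjOf τ (some ∘ τ) := by
  simp only [IsProjOf, prefixWord_some_comp, reduceOption_map_some, length_prefixWord]
  exact ⟨fun n => isPrefixOfSeq_of_isPrefix_prefixWord List.prefix_rfl, Filter.tendsto_id⟩

theorem IsProjOf.unique {τ' : ℕ → K} (h : IsProjOf τ σ) (h' : IsProjOf τ' σ) : τ = τ' := by
  funext i
  obtain ⟨n, hn⟩ := (h.2.eventually_ge_atTop (i + 1)).exists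
  exact (h.1 n i hn).symm.trans (h'.1 n i hn)

theorem IsProjOf.mem_limitLang (h : IsProjOf τ σ) (hσ : σ ∈ LimitLang L) :
    τ ∈ LimitLang (List.reduceOption '' L) := by
  intro n
  obtain ⟨m, hm⟩ := (h.2.eventually_ge_atTop n).exists
  obtain ⟨w, hw, hp⟩ := hσ m
  exact ⟨_, ⟨w, hw, rfl⟩, ((h.1 m).prefixWord_isPrefix hm).trans hp.reduceOption⟩

/-- The nodes of the tree to which König's lemma is applied when `τ` is lifted to a sequence in
`[L]`: the words that extend, within `L`, to words erasing to arbitrarily long prefixes of `τ`. -/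
def IsLiveFor (L : Set (List (Option K))) (τ : ℕ → K) (u : List (Option K)) : Prop :=
  ∀ n, ∃ v, u ++ v ∈ L ∧ prefixWord τ n <+: (u ++ v).reduceOption

theorem isLiveFor_nil (hτ : τ ∈ LimitLang (List.reduceOption '' L)) : IsLiveFor L τ [] := by
  intro n
  obtain ⟨_, ⟨w, hw, rfl⟩, hp⟩ := hτ n
  exact ⟨w, hw, hp⟩

theorem IsLiveFor.isPrefixOfSeq {u : List (Option K)} (hu : IsLiveFor L τ u) :
    IsPrefixOfSeq u.reduceOption τ := by
  obtain ⟨v, -, hp⟩ := hu u.reduceOption.length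
  rw [List.reduceOption_append] at hp
  exact isPrefixOfSeq_of_isPrefix_prefixWord <|
    List.prefix_of_prefix_length_le (List.prefix_append _ _) hp (by simp)

theorem IsLiveFor.exists_extension (hL : HasFiniteQuotients L) {u : List (Option K)}
    (hu : IsLiveFor L τ u) :
    ∃ u', IsLiveFor L τ u' ∧ u <+: u' ∧ u.reduceOption.length < u'.reduceOption.length := by
  set m := u.reduceOption.length
  have hsplit (n : ℕ) : ∃ u' v, u' ++ v ∈ L ∧ prefixWord τ n <+: (u' ++ v).reduceOption ∧
      u <+: u' ∧ u'.reduceOption = prefixWord τ (m + 1) := by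
    obtain ⟨w, hw, hp⟩ := hu (max n (m + 1))
    obtain ⟨r, hr⟩ := (prefixWord_isPrefix_prefixWord τ (le_max_right n (m + 1))).trans hp
    obtain ⟨s, hs⟩ := hu.isPrefixOfSeq.isPrefix_prefixWord m.le_succ
    rw [List.reduceOption_append, ← hs, List.append_assoc, List.append_cancel_left_eq] at hr
    obtain ⟨v₁, v₂, rfl, rfl, rfl⟩ := (List.reduceOption_eq_append_iff _ _ _).1 hr.symm
    rw [← List.append_assoc] at hw hp
    exact ⟨u ++ v₁, v₂, hw, (prefixWord_isPrefix_prefixWord τ (le_max_left _ _)).trans hp,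
      List.prefix_append _ _, by rw [List.reduceOption_append, hs]⟩
  choose u' v hmem hp hpre hred using hsplit
  -- The continuations of all the `u' k` with the same left quotient as `u' N` also continue `u' N`.
  obtain ⟨_, ⟨N, rfl⟩, hfreq⟩ : ∃ q ∈ Set.range fun n => leftQuot L (u' n),
      ∃ᶠ n in Filter.atTop, leftQuot L (u' n) = q :=
    (Filter.frequently_exists_finite
      (hL.subset (Set.range_comp_subset_range u' (leftQuot L)))).1 <|
      .of_forall fun n => ⟨_, ⟨n, rfl⟩, rfl⟩
  refine ⟨u' N, fun n => ?_, hpre N, by simp [hred, m]⟩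
  obtain ⟨k, hnk, hquot⟩ := Filter.frequently_atTop.1 hfreq n
  have hvk : v k ∈ leftQuot L (u' N) := hquot.subset (hmem k)
  refine ⟨v k, hvk, (prefixWord_isPrefix_prefixWord τ hnk).trans ?_⟩
  simpa only [List.reduceOption_append, hred] using hp k

theorem exists_chain_isLiveFor (hL : HasFiniteQuotients L)
    (hτ : τ ∈ LimitLang (List.reduceOption '' L)) :
    ∃ c : ℕ → List (Option K), (∀ n, IsLiveFor L τ (c n)) ∧ (∀ n, c n <+: c (n + 1)) ∧
      ∀ n, n ≤ (c n).reduceOption.length := by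
  have hnext (u : {u // IsLiveFor L τ u}) : ∃ u' : {u // IsLiveFor L τ u},
      u.1 <+: u'.1 ∧ u.1.reduceOption.length < u'.1.reduceOption.length := by
    obtain ⟨u', hlive, hpre, hlt⟩ := u.2.exists_extension hL
    exact ⟨⟨u', hlive⟩, hpre, hlt⟩
  choose next hpre hlt using hnext
  let c (n : ℕ) : {u // IsLiveFor L τ u} := next^[n] ⟨[], isLiveFor_nil hτ⟩
  have hc (n : ℕ) : c (n + 1) = next (c n) := Function.iterate_succ_apply' next n _
  have hmono : StrictMono fun n => (c n).1.reduceOption.length :=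
    strictMono_nat_of_lt_succ fun n => hc n ▸ hlt (c n)
  exact ⟨fun n => c n, fun n => (c n).2, fun n => by simpa only [hc] using hpre (c n),
    fun _ => hmono.le_apply⟩

theorem exists_isProjOf_of_mem_limitLang (hL : HasFiniteQuotients L)
    (hτ : τ ∈ LimitLang (List.reduceOption '' L)) : ∃ σ ∈ LimitLang L, IsProjOf τ σ := by
  obtain ⟨c, hlive, hc, hlen⟩ := exists_chain_isLiveFor hL hτ
  obtain ⟨σ, hσ, hcσ⟩ := exists_mem_limitLang_of_chain hc
    (fun n => (hlen n).trans (List.reduceOption_length_le _))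
    (fun n => (hlive n 0).imp' (c n ++ ·) fun v hv => ⟨hv.1, List.prefix_append _ _⟩)
  refine ⟨σ, hσ, fun n => ?_, Filter.tendsto_atTop_atTop_of_monotone ?_ fun n => ?_⟩
  · have hn : n ≤ (c n).length := (hlen n).trans (List.reduceOption_length_le _)
    exact isPrefixOfSeq_of_isPrefix_prefixWord <|
      ((hcσ n).prefixWord_isPrefix hn).reduceOption.trans
        ((hlive n).isPrefixOfSeq.isPrefix_prefixWord le_rfl)
  · exact fun m n hmn => (prefixWord_isPrefix_prefixWord σ hmn).reduceOption.length_le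
  · exact ⟨(c n).length, by simpa only [(hcσ n).prefixWord_length] using hlen n⟩

theorem nonempty_limitLang_image_inter {W : Set (ℕ → K)}
    (h : (LimitLang L ∩ SeqObj W).Nonempty) :
    (LimitLang (List.reduceOption '' L) ∩ W).Nonempty := by
  obtain ⟨σ, hσ, τ, hτ, hproj⟩ := h
  exact ⟨τ, hproj.mem_limitLang hσ, hτ⟩

theorem nonempty_limitLang_inter_seqObj_iff (hL : HasFiniteQuotients L) {W : Set (ℕ → K)} :
    (LimitLang L ∩ SeqObj W).Nonempty ↔ (LimitLang (List.reduceOption '' L) ∩ W).Nonempty := by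
  refine ⟨nonempty_limitLang_image_inter, ?_⟩
  rintro ⟨τ, hτ, hW⟩
  obtain ⟨σ, hσ, hproj⟩ := exists_isProjOf_of_mem_limitLang hL hτ
  exact ⟨σ, hσ, τ, hW, hproj⟩

end Projection

section Embedding

variable {K : Type u}

theorem preimage_seqObj (W : Set (ℕ → K)) : (some ∘ ·) ⁻¹' SeqObj W = W := by
  ext τ
  constructor
  · rintro ⟨τ', hτ', hproj⟩
    rwa [(isProjOf_some_comp τ).unique hproj]
  · exact fun hτ => ⟨τ, hτ, isProjOf_some_comp τ⟩

theorem limitLang_image_map_some (L : Set (List K)) :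
    LimitLang (List.map some '' L) = (some ∘ ·) '' LimitLang L := by
  ext σ
  constructor
  · intro hσ
    have hsome (i : ℕ) : ∃ k, some k = σ i := by
      obtain ⟨_, ⟨w, -, rfl⟩, hp⟩ := hσ (i + 1)
      have := hp.getElem (i := i) (by simp)
      exact ⟨_, by simpa using this.symm⟩
    choose τ hτ using hsome
    obtain rfl : some ∘ τ = σ := funext hτ
    refine ⟨τ, ?_, rfl⟩
    have := (isProjOf_some_comp τ).mem_limitLang hσ
    simpa only [Set.image_image, reduceOption_map_some, Set.image_id'] using this
  · rintro ⟨τ, hτ, rfl⟩ n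
    obtain ⟨w, hw, hp⟩ := hτ n
    exact ⟨_, ⟨w, hw, rfl⟩, prefixWord_some_comp τ n ▸ hp.map some⟩

end Embedding

section Preference

variable {A B : Type u} {W N N' : Set (ℕ → A)}

theorem setLe_iff :
    SetLe W N N' ↔
      (N.Nonempty → N'.Nonempty) ∧ ((N ∩ W).Nonempty → (N' ∩ W).Nonempty) := by
  constructor
  · refine fun h => ⟨fun ⟨ρ, hρ⟩ => ?_, fun ⟨ρ, hρ, hW⟩ => ?_⟩
    · exact (h ρ hρ).imp fun _ => And.left
    · obtain ⟨ρ', hρ', hle⟩ := h ρ hρ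
      exact ⟨ρ', hρ', not_not.1 fun hW' => hle ⟨hW', hW⟩⟩
  · rintro ⟨hne, hneW⟩ ρ hρ
    by_cases hW : ρ ∈ W
    · obtain ⟨ρ', hρ', hW'⟩ := hneW ⟨ρ, hρ, hW⟩
      exact ⟨ρ', hρ', fun hlt => hlt.1 hW'⟩
    · obtain ⟨ρ', hρ'⟩ := hne ⟨ρ, hρ⟩
      exact ⟨ρ', hρ', fun hlt => hW hlt.2⟩

theorem SetLt.nonempty_right (h : SetLt W N N') : N'.Nonempty :=
  h.imp fun _ => And.left

theorem setLt_iff_of_nonempty (hN : N.Nonempty) :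
    SetLt W N N' ↔ ¬ (N ∩ W).Nonempty ∧ (N' ∩ W).Nonempty := by
  constructor
  · rintro ⟨ρ', hρ', hlt⟩
    exact ⟨fun ⟨ρ, hρ, hW⟩ => (hlt ρ hρ).1 hW, ρ', hρ', (hlt _ hN.some_mem).2⟩
  · rintro ⟨hN, ρ', hρ', hW'⟩
    exact ⟨ρ', hρ', fun ρ hρ => ⟨fun hW => hN ⟨ρ, hρ, hW⟩, hW'⟩⟩

theorem setLe_image_iff {W : Set (ℕ → B)} (g : (ℕ → A) → ℕ → B) :
    SetLe W (g '' N) (g '' N') ↔ SetLe (g ⁻¹' W) N N' := by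
  simp [SetLe, PrefLe, PrefLt]

theorem setLt_image_iff {W : Set (ℕ → B)} (g : (ℕ → A) → ℕ → B) :
    SetLt W (g '' N) (g '' N') ↔ SetLt (g ⁻¹' W) N N' := by
  simp [SetLt, PrefLt]

end Preference

section SequentialVersion

variable {K M : Type u} {μ : M → K → M} {minit : M} {W : Set (ℕ → K)}

theorem iterUpd_seqUpd (μ : M → K → M) (m : M) (w : List (Option K)) :
    iterUpd (seqUpd μ) m w = iterUpd μ m w.reduceOption := by
  induction w generalizing m with
  | nil => rfl
  | cons o w ih =>
    cases o with
    | none => exact ih m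
    | some k => exact ih (μ m k)

theorem memLang_seqUpd (μ : M → K → M) (m m' : M) :
    MemLang (seqUpd μ) m m' = List.reduceOption ⁻¹' MemLang μ m m' :=
  Set.ext fun w => by simp [MemLang, iterUpd_seqUpd]

theorem map_some_mem_memLang_seqUpd_iff {m m' : M} {w : List K} :
    w.map some ∈ MemLang (seqUpd μ) m m' ↔ w ∈ MemLang μ m m' := by
  rw [memLang_seqUpd, Set.mem_preimage, reduceOption_map_some]

theorem MMonotone.seqObj (h : MMonotone μ minit W) :
    MMonotone (seqUpd μ) minit (SeqObj W) := by
  rintro m L₁ L₂ hL₁ hL₂ ⟨ρ, hρ, hlt⟩ ρ' hρ'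
  rw [memLang_seqUpd] at hρ hρ'
  have hmeets {L : Set (List (Option K))} (hL : RegularLang L) (ρ : List (Option K)) :
      (LimitLang (consLang ρ L) ∩ SeqObj W).Nonempty ↔
        (LimitLang (consLang ρ.reduceOption (List.reduceOption '' L)) ∩ W).Nonempty := by
    rw [nonempty_limitLang_inter_seqObj_iff ((regularLang_iff.1 hL).2.consLang ρ),
      image_consLang List.reduceOption_append]
  refine setLe_iff.2 ⟨fun _ => ?_, fun hmeet₁ => ?_⟩
  · rw [limitLang_consLang_nonempty_iff, ← limitLang_consLang_nonempty_iff ρ]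
    exact hlt.nonempty_right
  · have hne₁ : (LimitLang (consLang ρ L₁)).Nonempty := by
      rw [limitLang_consLang_nonempty_iff, ← limitLang_consLang_nonempty_iff ρ']
      exact hmeet₁.left
    rw [setLt_iff_of_nonempty hne₁, hmeets hL₁, hmeets hL₂] at hlt
    rw [hmeets hL₁] at hmeet₁
    have hne₁' : (LimitLang (consLang ρ.reduceOption (List.reduceOption '' L₁))).Nonempty := by
      rw [limitLang_consLang_nonempty_iff,
        ← limitLang_consLang_nonempty_iff ρ'.reduceOption]
      exact hmeet₁.left
    have hle := h m _ _ hL₁.image_reduceOption hL₂.image_reduceOption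
      ⟨_, hρ, (setLt_iff_of_nonempty hne₁').2 hlt⟩ _ hρ'
    exact (hmeets hL₂ ρ').2 ((setLe_iff.1 hle).2 hmeet₁)

theorem MSelective.seqObj (h : MSelective μ minit W) :
    MSelective (seqUpd μ) minit (SeqObj W) := by
  intro ρ L₁ L₂ L₃ hL₁ hL₂ hL₃ hmem₁ hmem₂
  rw [iterUpd_seqUpd, memLang_seqUpd, ← Set.image_subset_iff] at hmem₁ hmem₂
  refine setLe_iff.2 ⟨fun hne => ?_, fun hmeet => ?_⟩
  · simp only [Set.union_nonempty, limitLang_consLang_nonempty_iff, or_assoc] at hne ⊢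
    exact limitLang_nonempty_of_catLang_kstarLang_union hne
  · have hle := h ρ.reduceOption _ _ _ hL₁.image_reduceOption hL₂.image_reduceOption
      hL₃.image_reduceOption hmem₁ hmem₂
    have hmeet' := nonempty_limitLang_image_inter hmeet
    have hquot {L : Set (List (Option K))} (hL : RegularLang L) : HasFiniteQuotients L :=
      (regularLang_iff.1 hL).2
    rw [image_consLang List.reduceOption_append, image_catLang List.reduceOption_append,
      image_kstarLang List.reduceOption_append, Set.image_union] at hmeet'
    have hunion := (setLe_iff.1 hle).2 hmeet'
    simpa only [Set.union_inter_distrib_right, Set.union_nonempty,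
      nonempty_limitLang_inter_seqObj_iff ((hquot hL₁).kstarLang.consLang ρ),
      nonempty_limitLang_inter_seqObj_iff ((hquot hL₂).kstarLang.consLang ρ),
      nonempty_limitLang_inter_seqObj_iff ((hquot hL₃).consLang ρ),
      image_consLang List.reduceOption_append, image_kstarLang List.reduceOption_append]
      using hunion

theorem MMonotone.of_seqObj (h : MMonotone (seqUpd μ) minit (SeqObj W)) :
    MMonotone μ minit W := by
  rintro m L₁ L₂ hL₁ hL₂ ⟨ρ, hρ, hlt⟩ ρ' hρ'
  have hlimit (ρ : List K) (L : Set (List K)) :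
      LimitLang (consLang (ρ.map some) (List.map some '' L)) =
        (some ∘ ·) '' LimitLang (consLang ρ L) := by
    rw [← limitLang_image_map_some, image_consLang fun _ _ => List.map_append]
  have hle := h m _ _ hL₁.image_map_some hL₂.image_map_some
    ⟨ρ.map some, map_some_mem_memLang_seqUpd_iff.2 hρ, by
      rwa [hlimit, hlimit, setLt_image_iff, preimage_seqObj]⟩
    (ρ'.map some) (map_some_mem_memLang_seqUpd_iff.2 hρ')
  rwa [hlimit, hlimit, setLe_image_iff, preimage_seqObj] at hle

theorem MSelective.of_seqObj (h : MSelective (seqUpd μ) minit (SeqObj W)) :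
    MSelective μ minit W := by
  intro ρ L₁ L₂ L₃ hL₁ hL₂ hL₃ hmem₁ hmem₂
  have happend (u v : List K) : (u ++ v).map some = u.map some ++ v.map some := List.map_append
  have hmem {L : Set (List K)} {m : M} (hL : L ⊆ MemLang μ m m) :
      List.map some '' L ⊆ MemLang (seqUpd μ) m m :=
    Set.image_subset_iff.2 fun w hw => map_some_mem_memLang_seqUpd_iff.2 (hL hw)
  have hle := h (ρ.map some) _ _ _ hL₁.image_map_some hL₂.image_map_some hL₃.image_map_some
  rw [iterUpd_seqUpd, reduceOption_map_some] at hle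
  replace hle := hle (hmem hmem₁) (hmem hmem₂)
  simpa only [← Set.image_union, ← image_kstarLang happend, ← image_catLang happend,
    ← image_consLang happend, limitLang_image_map_some, setLe_image_iff, preimage_seqObj] using hle

end SequentialVersion

/-- `W` is `M`-monotone and `M`-selective iff `Seq(W)` is `Seq(M)`-monotone and
`Seq(M)`-selective over the alphabet `Option K`. -/
theorem stmt9 {K M : Type u} [Nonempty K] [Nonempty M]
    (minit : M) (μ : M → K → M) (W : Set (ℕ → K)) :
    (MMonotone μ minit W ∧ MSelective μ minit W) ↔
    (MMonotone (seqUpd μ) minit (SeqObj W) ∧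
     MSelective (seqUpd μ) minit (SeqObj W)) :=
  ⟨fun ⟨hmono, hsel⟩ => ⟨hmono.seqObj, hsel.seqObj⟩,
    fun ⟨hmono, hsel⟩ => ⟨hmono.of_seqObj, hsel.of_seqObj⟩⟩
end
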